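/- Let 1 ≤ p, q₁, q₂ ≤ ∞ satisfy 1/r = 1/p + 1/q₁ + 1/q₂, set q_max = max(q₁,q₂) and q_min = min(q₁,q₂), and assume q_max ≥ p′. Let a ∈ L^p S^m_ρ(n,2) with 0 ≤ ρ ≤ 1 and m < n(ρ−1)( 1/min(2, q_max, p) + 1/min(2, q_min, p·q_max/(q_max+p)) ), with the convention that p·q_max/(q_max+p) = q_max when p = ∞. Then the bilinear pseudodifferential operator T_a(f,g)(x) = ∫∫ a(x,ξ,η) e^{i⟨x, ξ+η⟩} f̂(ξ) ĝ(η) dξ dη satisfies ‖T_a(f,g)‖_{L^r} ≤ C ‖f‖_{L^{q₁}} ‖g‖_{L^{q₂}} for all Schwartz f, g. -/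

import Mathlib

open MeasureTheory Real Complex
open scoped ENNReal NNReal RealInnerProductSpace SchwartzMap Classical

noncomputable section

/-- `ℝⁿ` as a Euclidean space. -/
abbrev En (n : ℕ) : Type := EuclideanSpace ℝ (Fin n)

/-- Partial derivative in the `i`-th coordinate direction. -/
def pd {n : ℕ} {F : Type} [NormedAddCommGroup F] [NormedSpace ℝ F]
    (i : Fin n) (f : En n → F) : En n → F :=
  fun x => fderiv ℝ f x (EuclideanSpace.single i 1)

/-- Multi-index partial derivative `∂^α`. -/
def mderiv {n : ℕ} {F : Type} [NormedAddCommGroup F] [NormedSpace ℝ F]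
    (α : Fin n → ℕ) (f : En n → F) : En n → F :=
  (List.finRange n).foldr (fun i g => (pd i)^[α i] g) f

/-- The order `|α|` of a multi-index. -/
def mdeg {n : ℕ} (α : Fin n → ℕ) : ℕ := ∑ i, α i

/-- The finite set of multi-indices `α` with every entry `≤ k` and `|α| ≤ k`;
this enumerates all multi-indices of order at most `k`. -/
def multiIdx (n k : ℕ) : Finset (Fin n → ℕ) :=
  (Fintype.piFinset fun _ : Fin n => Finset.range (k + 1)).filter fun α => mdeg α ≤ k

/-- Japanese bracket `⟨ξ⟩^t = (1+|ξ|²)^{t/2}`. -/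
def jb {n : ℕ} (ξ : En n) (t : ℝ) : ℝ := (1 + ‖ξ‖ ^ 2) ^ (t / 2)

/-- The rough amplitude class `L^p S^m_ρ`. -/
def LpSm {n : ℕ} (p : ℝ≥0∞) (m ρ : ℝ) (a : En n → En n → ℂ) : Prop :=
  (∀ x, ContDiff ℝ (⊤ : ℕ∞) (a x)) ∧
  (∀ (α : Fin n → ℕ) (ξ : En n), AEStronglyMeasurable (fun x => mderiv α (a x) ξ) volume) ∧
  ∀ α : Fin n → ℕ, ∃ C : ℝ, ∀ ξ : En n,
    eLpNorm (fun x => mderiv α (a x) ξ) p volume ≤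
      ENNReal.ofReal (C * jb ξ (m - ρ * (mdeg α : ℝ)))

/-- The seminorms `|a|_{p,m,s}` of an amplitude in `L^p S^m_ρ`. -/
def aSemi {n : ℕ} (p : ℝ≥0∞) (m ρ : ℝ) (s : ℕ) (a : En n → En n → ℂ) : ℝ≥0∞ :=
  ∑ α ∈ multiIdx n s, ⨆ ξ : En n,
    ENNReal.ofReal (jb ξ (ρ * (mdeg α : ℝ) - m)) *
      eLpNorm (fun x => mderiv α (a x) ξ) p volume

/-- The mixed derivative `∂_ξ^α ∂_x^β φ(x,ξ)`. -/
def mixedD {n : ℕ} (α β : Fin n → ℕ) (φ : En n → En n → ℝ) (x ξ : En n) : ℝ :=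
  mderiv α (fun ζ => mderiv β (fun y => φ y ζ) x) ξ

/-- The phase function class `Φ^k`. -/
def PhiClass {n : ℕ} (k : ℕ) (φ : En n → En n → ℝ) : Prop :=
  ContDiffOn ℝ (⊤ : ℕ∞) (fun q : En n × En n => φ q.1 q.2) {q | q.2 ≠ 0} ∧
  (∀ (x ξ : En n) (t : ℝ), 0 < t → φ x (t • ξ) = t * φ x ξ) ∧
  ∀ α β : Fin n → ℕ, k ≤ mdeg α + mdeg β →
    ∃ C : ℝ, ∀ (x ξ : En n), ξ ≠ 0 →
      ‖ξ‖ ^ ((mdeg α : ℝ) - 1) * |mixedD α β φ x ξ| ≤ C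

/-- The mixed Hessian matrix `[∂²φ/∂x_j∂ξ_k]`. -/
def mixHess {n : ℕ} (φ : En n → En n → ℝ) (x ξ : En n) : Matrix (Fin n) (Fin n) ℝ :=
  Matrix.of fun j k => pd j (fun y => pd k (φ y) ξ) x

/-- The strong non-degeneracy (SND) condition. -/
def SNDcond {n : ℕ} (φ : En n → En n → ℝ) : Prop :=
  ∃ c : ℝ, 0 < c ∧ ∀ (x ξ : En n), ξ ≠ 0 → c ≤ |(mixHess φ x ξ).det|

/-- The Fourier transform `f̂(ξ) = ∫ e^{-i⟨y,ξ⟩} f(y) dy`. -/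
def ft {n : ℕ} (f : En n → ℂ) (ξ : En n) : ℂ :=
  ∫ y : En n, Complex.exp (-(Complex.I * Complex.ofReal ⟪y, ξ⟫)) * f y

/-- The linear Fourier integral operator
`T_a f(x) = (2π)^{-n} ∫ e^{iφ(x,ξ)} a(x,ξ) f̂(ξ) dξ`. -/
def fio {n : ℕ} (a : En n → En n → ℂ) (φ : En n → En n → ℝ) (f : En n → ℂ)
    (x : En n) : ℂ :=
  (((2 * Real.pi) ^ n)⁻¹ : ℝ) •
    ∫ ξ : En n, Complex.exp (Complex.I * Complex.ofReal (φ x ξ)) * a x ξ * ft f ξ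

/-- The conjugate exponent `p′` of `p ∈ [1,∞]`. -/
def pconj (p : ℝ≥0∞) : ℝ≥0∞ := (1 - p⁻¹)⁻¹

/-- The order `𝔪(ρ,p,q)` from Definition 4.6. -/
def frakm (n : ℕ) (ρ : ℝ) (p q : ℝ≥0∞) : ℝ :=
  if p < 2 ∨ (2 ≤ p ∧ q < pconj p) then
    (n : ℝ) * (ρ - 1) * (min p q)⁻¹.toReal -
      (((n : ℝ) - 1) / 2) * (p⁻¹.toReal + (min p q)⁻¹.toReal)
  else if 2 ≤ q then
    (n : ℝ) * (ρ - 1) / 2 - ((n : ℝ) - 1) * (1 / 2 - q⁻¹.toReal)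
  else
    (n : ℝ) * (ρ - 1) * q⁻¹.toReal -
      (((n : ℝ) - 1) / (1 - 2 * p⁻¹.toReal)) * (q⁻¹.toReal - 1 / 2)

/-- The order `ℳ(ρ,p,q)` from Definition 4.6. -/
def scrM (n : ℕ) (ρ : ℝ) (p q : ℝ≥0∞) : ℝ :=
  (n : ℝ) * (ρ - 1) * q⁻¹.toReal -
    (((n : ℝ) - 1) / (1 + p⁻¹.toReal)) * (q⁻¹.toReal - 1 / 2)

/-- The distribution function `λ_f(s) = |{x : |f(x)| > s}|`. -/
def distFn {n : ℕ} (f : En n → ℂ) (s : ℝ) : ℝ≥0∞ := volume {x : En n | s < ‖f x‖}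

/-- The decreasing rearrangement `f*`. -/
def rearr {n : ℕ} (f : En n → ℂ) (t : ℝ) : ℝ :=
  sInf {s : ℝ | 0 ≤ s ∧ distFn f s ≤ ENNReal.ofReal t}

/-- The Lorentz space quasinorm
`‖f‖_{L^{r,q}} = (∫_0^∞ (t^{1/r} f*(t))^q dt/t)^{1/q}`. -/
def lorentzNorm {n : ℕ} (r q : ℝ≥0∞) (f : En n → ℂ) : ℝ≥0∞ :=
  (∫⁻ t in Set.Ioi (0 : ℝ),
      ENNReal.ofReal ((t ^ r⁻¹.toReal * rearr f t) ^ q.toReal / t)) ^ q⁻¹.toReal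

/-- Mixed frequency derivatives `∂_ξ^{α₁} ∂_η^{α₂} a(x,ξ,η)` of a bilinear amplitude. -/
def d2 {n : ℕ} (α₁ α₂ : Fin n → ℕ) (a : En n → En n → En n → ℂ)
    (x ξ η : En n) : ℂ :=
  mderiv α₁ (fun ζ => mderiv α₂ (fun θ => a x ζ θ) η) ξ

/-- Mixed derivatives `∂_x^β ∂_ξ^{α₁} ∂_η^{α₂} a(x,ξ,η)` of a bilinear amplitude. -/
def d3 {n : ℕ} (β α₁ α₂ : Fin n → ℕ) (a : En n → En n → En n → ℂ)
    (x ξ η : En n) : ℂ :=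
  mderiv β (fun y => d2 α₁ α₂ a y ξ η) x

/-- The bilinear product-type rough amplitude class `L^p_Π S^{(m₁,m₂)}_{(ρ₁,ρ₂)}(n,2)`. -/
def LpPiSm2 {n : ℕ} (p : ℝ≥0∞) (m₁ m₂ ρ₁ ρ₂ : ℝ) (a : En n → En n → En n → ℂ) : Prop :=
  (∀ x, ContDiff ℝ (⊤ : ℕ∞) (fun q : En n × En n => a x q.1 q.2)) ∧
  (∀ (α₁ α₂ : Fin n → ℕ) (ξ η : En n),
    AEStronglyMeasurable (fun x => d2 α₁ α₂ a x ξ η) volume) ∧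
  ∀ α₁ α₂ : Fin n → ℕ, ∃ C : ℝ, ∀ ξ η : En n,
    eLpNorm (fun x => d2 α₁ α₂ a x ξ η) p volume ≤
      ENNReal.ofReal (C * jb ξ (m₁ - ρ₁ * (mdeg α₁ : ℝ)) * jb η (m₂ - ρ₂ * (mdeg α₂ : ℝ)))

/-- The bilinear rough amplitude class `L^p S^m_ρ(n,2)`. -/
def LpSm2 {n : ℕ} (p : ℝ≥0∞) (m ρ : ℝ) (a : En n → En n → En n → ℂ) : Prop :=
  (∀ x, ContDiff ℝ (⊤ : ℕ∞) (fun q : En n × En n => a x q.1 q.2)) ∧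
  (∀ (α₁ α₂ : Fin n → ℕ) (ξ η : En n),
    AEStronglyMeasurable (fun x => d2 α₁ α₂ a x ξ η) volume) ∧
  ∀ α₁ α₂ : Fin n → ℕ, ∃ C : ℝ, ∀ ξ η : En n,
    eLpNorm (fun x => d2 α₁ α₂ a x ξ η) p volume ≤
      ENNReal.ofReal (C * (1 + ‖ξ‖ + ‖η‖) ^ (m - ρ * ((mdeg α₁ : ℝ) + (mdeg α₂ : ℝ))))

/-- The bilinear Hörmander class `S^m_{ρ,δ}(n,2)`. -/
def HormS2 {n : ℕ} (m ρ δ : ℝ) (a : En n → En n → En n → ℂ) : Prop :=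
  ContDiff ℝ (⊤ : ℕ∞) (fun q : En n × En n × En n => a q.1 q.2.1 q.2.2) ∧
  ∀ β α₁ α₂ : Fin n → ℕ, ∃ C : ℝ, ∀ x ξ η : En n,
    ‖d3 β α₁ α₂ a x ξ η‖ ≤
      C * (1 + ‖ξ‖ + ‖η‖) ^ (m - ρ * ((mdeg α₁ : ℝ) + (mdeg α₂ : ℝ)) + δ * (mdeg β : ℝ))

/-- The bilinear Fourier integral operator
`T_a(f,g)(x) = ∫∫ a(x,ξ,η) e^{iφ₁(x,ξ)+iφ₂(x,η)} f̂(ξ) ĝ(η) dξ dη`. -/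
def bfio {n : ℕ} (a : En n → En n → En n → ℂ) (φ₁ φ₂ : En n → En n → ℝ)
    (f g : En n → ℂ) (x : En n) : ℂ :=
  ∫ w : En n × En n,
    a x w.1 w.2 * Complex.exp (Complex.I * Complex.ofReal (φ₁ x w.1 + φ₂ x w.2)) *
      ft f w.1 * ft g w.2

/-- Partial derivative of a function of `N` frequency variables in the `i`-th coordinate
of the `j`-th variable. -/
def pdN {n N : ℕ} (j : Fin N) (i : Fin n) (g : (Fin N → En n) → ℂ) :
    (Fin N → En n) → ℂ :=
  fun ξ => fderiv ℝ g ξ (Pi.single j (EuclideanSpace.single i 1))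

/-- Multi-index derivative `∂_{ξ₁}^{A 1} ⋯ ∂_{ξ_N}^{A N}`. -/
def mderivN {n N : ℕ} (A : Fin N → Fin n → ℕ) (g : (Fin N → En n) → ℂ) :
    (Fin N → En n) → ℂ :=
  (List.finRange N).foldr
    (fun j h => (List.finRange n).foldr (fun i h' => (pdN j i)^[A j i] h') h) g

/-- The multilinear product-type rough amplitude class `L^p_Π S^{m⃗}_{ρ⃗}(n,N)`. -/
def LpPiSmN {n N : ℕ} (p : ℝ≥0∞) (m ρ : Fin N → ℝ)
    (a : En n → (Fin N → En n) → ℂ) : Prop :=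
  (∀ x, ContDiff ℝ (⊤ : ℕ∞) (a x)) ∧
  (∀ (A : Fin N → Fin n → ℕ) (ξ : Fin N → En n),
    AEStronglyMeasurable (fun x => mderivN A (a x) ξ) volume) ∧
  ∀ A : Fin N → Fin n → ℕ, ∃ C : ℝ, ∀ ξ : Fin N → En n,
    eLpNorm (fun x => mderivN A (a x) ξ) p volume ≤
      ENNReal.ofReal (C * ∏ j, jb (ξ j) (m j - ρ j * (mdeg (A j) : ℝ)))

/-- The multilinear rough amplitude class `L^p S^m_ρ(n,N)`. -/
def LpSmN {n N : ℕ} (p : ℝ≥0∞) (m ρ : ℝ) (a : En n → (Fin N → En n) → ℂ) : Prop :=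
  (∀ x, ContDiff ℝ (⊤ : ℕ∞) (a x)) ∧
  (∀ (A : Fin N → Fin n → ℕ) (ξ : Fin N → En n),
    AEStronglyMeasurable (fun x => mderivN A (a x) ξ) volume) ∧
  ∀ A : Fin N → Fin n → ℕ, ∃ C : ℝ, ∀ ξ : Fin N → En n,
    eLpNorm (fun x => mderivN A (a x) ξ) p volume ≤
      ENNReal.ofReal (C * (1 + ∑ j, ‖ξ j‖) ^ (m - ρ * ∑ j, (mdeg (A j) : ℝ)))

/-- The multilinear Fourier integral operator. -/
def mfio {n N : ℕ} (a : En n → (Fin N → En n) → ℂ) (φ : Fin N → En n → En n → ℝ)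
    (f : Fin N → En n → ℂ) (x : En n) : ℂ :=
  ∫ ξ : Fin N → En n,
    a x ξ * Complex.exp (Complex.I * Complex.ofReal (∑ j, φ j x (ξ j))) *
      ∏ j, ft (f j) (ξ j)

/-- The Sobolev (Bessel potential) norm `‖f‖_{H^{s,q}} = ‖ℱ^{-1}(⟨ξ⟩^s f̂)‖_{L^q}`. -/
def besselNorm {n : ℕ} (s : ℝ) (q : ℝ≥0∞) (f : En n → ℂ) : ℝ≥0∞ :=
  eLpNorm (fun x : En n =>
    (((2 * Real.pi) ^ n)⁻¹ : ℝ) •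
      ∫ ξ : En n, Complex.ofReal (jb ξ s) * ft f ξ *
        Complex.exp (Complex.I * Complex.ofReal ⟪x, ξ⟫)) q volume

/-!
Split frequency space into the dyadic shells `1 + |(ξ, η)| ∼ 2 ^ k` and move the Fourier transforms
from `f` and `g` to the pieces of `a`. With `l = 2 ^ (ρ k)`, the operator `∏ᵢ (1 - l² ∂ᵢ²)` in `ξ`
multiplies the transformed piece by `∏ᵢ (1 + l² zᵢ²)`, and likewise in `η`, so Hausdorff–Young and
Hölder bound the piece of `T_a(f, g)(x)` by the `L^t` norm in `(ξ, η)` of a jet of `a` weighted by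
powers of `l`, times averages of `f` and `g` around `x` at scale `1 / l`: their `L^{s₁}` and
`L^{s₂}` norms for the measure `∏ᵢ (1 + l² zᵢ²)⁻¹ dz`. Here `s₁, s₂ ≤ min (2, t)`, and restricting
to the ball containing the shell pays for the passage from `L^t` to `L^{sᵢ}`.

By Minkowski's inequality these averages are bounded on `L^{q₁}` and `L^{q₂}`, and
`a ∈ L^p S^m_ρ` controls the mixed `L^p_x L^t_{ξ,η}` norm of the jet, so Hölder's inequality in `x`
gives the shell a norm of order `2 ^ (k (m + n (1 - ρ) (1 / s₁ + 1 / s₂)))`. With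
`sᵢ = min (2, qᵢ, p)` and `t = min (2, p)` the exponent is negative and the series converges.
-/

section Lp

variable {X Y : Type*} [MeasurableSpace X] [MeasurableSpace Y] {μ : Measure X} {ν : Measure Y}

lemma eLpNorm_mul_le_eLpNormEssSup_mul {F G : X → ℝ≥0∞} (hG : AEMeasurable G μ) (q : ℝ≥0∞) :
    eLpNorm (fun x ↦ F x * G x) q μ ≤ eLpNormEssSup F μ * eLpNorm G q μ := by
  refine eLpNorm_le_mul_eLpNorm_of_ae_le_mul'' q hG.aestronglyMeasurable ?_
  filter_upwards [ae_le_eLpNormEssSup (f := F) (μ := μ)] with x hx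
  simp only [enorm_eq_self] at hx ⊢
  gcongr

lemma eLpNorm_mul_le_mul_eLpNorm (p q r : ℝ≥0∞) [hpqr : ENNReal.HolderTriple p q r]
    {F G : X → ℝ≥0∞} (hF : AEMeasurable F μ) (hG : AEMeasurable G μ) :
    eLpNorm (fun x ↦ F x * G x) r μ ≤ eLpNorm F p μ * eLpNorm G q μ := by
  have hinv := hpqr.one_div_eq
  obtain rfl | rfl | hp := ENNReal.trichotomy p
  · simp_all
  · obtain rfl : r = q := by simpa using hinv
    exact eLpNorm_mul_le_eLpNormEssSup_mul hG r
  obtain rfl | rfl | hq := ENNReal.trichotomy q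
  · simp_all
  · obtain rfl : r = p := by simpa using hinv
    simpa only [mul_comm, eLpNorm_exponent_top] using eLpNorm_mul_le_eLpNormEssSup_mul hF r
  obtain ⟨hp₀, hp_top⟩ := ENNReal.toReal_pos_iff.mp hp
  obtain ⟨hq₀, hq_top⟩ := ENNReal.toReal_pos_iff.mp hq
  have hinv_real : 1 / r.toReal = 1 / p.toReal + 1 / q.toReal := by
    have := congrArg ENNReal.toReal hinv
    rw [ENNReal.toReal_add (by simpa using hp₀.ne') (by simpa using hq₀.ne')] at this
    simpa using this
  have hr : 0 < r.toReal := one_div_pos.mp <| by rw [hinv_real]; positivity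
  obtain ⟨hr₀, hr_top⟩ := ENNReal.toReal_pos_iff.mp hr
  have hrp : r.toReal < p.toReal := lt_of_one_div_lt_one_div hp <|
    hinv_real ▸ lt_add_of_pos_right _ (by positivity)
  rw [eLpNorm_eq_eLpNorm' hr₀.ne' hr_top.ne, eLpNorm_eq_eLpNorm' hp₀.ne' hp_top.ne,
    eLpNorm_eq_eLpNorm' hq₀.ne' hq_top.ne]
  exact ENNReal.lintegral_Lp_mul_le_Lq_mul_Lr hr hrp hinv_real μ hF hG

lemma eLpNorm_mul_mul_le {r p q₁ q₂ : ℝ≥0∞} (hr : r⁻¹ = p⁻¹ + q₁⁻¹ + q₂⁻¹)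
    {u v w : X → ℝ≥0∞} (hu : AEMeasurable u μ) (hv : AEMeasurable v μ) (hw : AEMeasurable w μ) :
    eLpNorm (fun x ↦ u x * (v x * w x)) r μ ≤
      eLpNorm u p μ * (eLpNorm v q₁ μ * eLpNorm w q₂ μ) := by
  have hq : ENNReal.HolderTriple q₁ q₂ (q₁⁻¹ + q₂⁻¹)⁻¹ := ⟨by rw [inv_inv]⟩
  have hpr : ENNReal.HolderTriple p (q₁⁻¹ + q₂⁻¹)⁻¹ r := ⟨by rw [inv_inv, hr, add_assoc]⟩
  refine (eLpNorm_mul_le_mul_eLpNorm p (q₁⁻¹ + q₂⁻¹)⁻¹ r hu (hv.mul hw)).trans ?_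
  gcongr
  exact eLpNorm_mul_le_mul_eLpNorm q₁ q₂ _ hv hw

lemma eLpNorm_iSup_le_of_monotone {F : ℕ → X → ℝ≥0∞} (hF : ∀ k, AEMeasurable (F k) μ)
    (hmono : ∀ x, Monotone fun k ↦ F k x) (p : ℝ≥0∞) :
    eLpNorm (fun x ↦ ⨆ k, F k x) p μ ≤ ⨆ k, eLpNorm (F k) p μ := by
  obtain rfl | rfl | hp := ENNReal.trichotomy p
  · simp
  · simp only [eLpNorm_exponent_top]
    refine essSup_le_of_ae_le _ ?_
    have hbound : ∀ᵐ x ∂μ, ∀ k, F k x ≤ eLpNormEssSup (F k) μ :=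
      ae_all_iff.2 fun k ↦ ae_le_eLpNormEssSup (f := F k)
    filter_upwards [hbound] with x hx using iSup_mono hx
  obtain ⟨hp₀, hp_top⟩ := ENNReal.toReal_pos_iff.mp hp
  simp only [eLpNorm_eq_lintegral_rpow_enorm_toReal hp₀.ne' hp_top.ne, enorm_eq_self, one_div]
  rw [ENNReal.rpow_inv_le_iff hp]
  have hpow (x : X) : (⨆ k, F k x) ^ p.toReal = ⨆ k, F k x ^ p.toReal :=
    (ENNReal.orderIsoRpow p.toReal hp).map_iSup _
  simp_rw [hpow]
  rw [lintegral_iSup' (fun k ↦ (hF k).pow_const _)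
    (.of_forall fun x i j hij ↦ ENNReal.rpow_le_rpow (hmono x hij) hp.le)]
  refine iSup_le fun k ↦ ?_
  rw [← ENNReal.rpow_inv_le_iff hp]
  exact le_iSup (fun k ↦ (∫⁻ x, F k x ^ p.toReal ∂μ) ^ p.toReal⁻¹) k

lemma eLpNorm_tsum_le {p : ℝ≥0∞} (hp : 1 ≤ p) {F : ℕ → X → ℝ≥0∞}
    (hF : ∀ k, AEMeasurable (F k) μ) :
    eLpNorm (fun x ↦ ∑' k, F k x) p μ ≤ ∑' k, eLpNorm (F k) p μ := by
  simp_rw [ENNReal.tsum_eq_iSup_nat]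
  refine (eLpNorm_iSup_le_of_monotone (fun N ↦ Finset.aemeasurable_fun_sum _ fun k _ ↦ hF k)
    (fun x ↦ (Finset.sum_mono_set (F · x)).comp Finset.range_mono) p).trans ?_
  gcongr with N
  simpa only [← Finset.sum_fn] using
    eLpNorm_sum_le (fun k _ ↦ (hF k).aestronglyMeasurable) (s := Finset.range N) hp

lemma tsum_mul_mul_le (u v w : ℕ → ℝ≥0∞) :
    ∑' k, u k * (v k * w k) ≤ (∑' k, u k) * ((∑' k, v k) * ∑' k, w k) := by
  rw [← ENNReal.tsum_mul_right]
  gcongr with k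
  exacts [ENNReal.le_tsum k, ENNReal.le_tsum k]

/-- The case `r < 1` is allowed: the sum is split before Hölder's inequality is used, so that the
triangle inequality is only needed in `L^p`, `L^{q₁}` and `L^{q₂}`. -/
lemma eLpNorm_tsum_mul_mul_le {r p q₁ q₂ : ℝ≥0∞} (hp : 1 ≤ p) (hq₁ : 1 ≤ q₁) (hq₂ : 1 ≤ q₂)
    (hr : r⁻¹ = p⁻¹ + q₁⁻¹ + q₂⁻¹) {u v w : ℕ → X → ℝ≥0∞} (hu : ∀ k, AEMeasurable (u k) μ)
    (hv : ∀ k, AEMeasurable (v k) μ) (hw : ∀ k, AEMeasurable (w k) μ) :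
    eLpNorm (fun x ↦ ∑' k, u k x * (v k x * w k x)) r μ ≤
      (∑' k, eLpNorm (u k) p μ) * ((∑' k, eLpNorm (v k) q₁ μ) * ∑' k, eLpNorm (w k) q₂ μ) :=
  calc
    _ ≤ eLpNorm (fun x ↦ (∑' k, u k x) * ((∑' k, v k x) * ∑' k, w k x)) r μ :=
      eLpNorm_mono_enorm fun x ↦ tsum_mul_mul_le (u · x) (v · x) (w · x)
    _ ≤ eLpNorm (fun x ↦ ∑' k, u k x) p μ *
          (eLpNorm (fun x ↦ ∑' k, v k x) q₁ μ * eLpNorm (fun x ↦ ∑' k, w k x) q₂ μ) :=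
      eLpNorm_mul_mul_le hr (.tsum hu) (.tsum hv) (.tsum hw)
    _ ≤ _ := by gcongr <;> apply eLpNorm_tsum_le <;> assumption

lemma ofReal_two_rpow_add (a b : ℝ) : ENNReal.ofReal (2 ^ (a + b)) =
    ENNReal.ofReal (2 ^ a) * ENNReal.ofReal (2 ^ b) := by
  rw [← ENNReal.ofReal_mul (by positivity), Real.rpow_add two_pos]

lemma ofReal_two_rpow_rpow (a b : ℝ) :
    ENNReal.ofReal (2 ^ a) ^ b = ENNReal.ofReal (2 ^ (a * b)) := by
  rw [ENNReal.ofReal_rpow_of_pos (by positivity), Real.rpow_mul zero_le_two]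

lemma ofReal_two_rpow_mul_pow (a : ℝ) (k : ℕ) :
    ENNReal.ofReal (2 ^ (a * k)) = ENNReal.ofReal (2 ^ a) ^ k := by
  rw [← ENNReal.ofReal_pow (by positivity), ← Real.rpow_mul_natCast zero_le_two]

lemma tsum_ofReal_two_rpow_mul_lt_top {a : ℝ} (ha : a < 0) :
    ∑' k : ℕ, ENNReal.ofReal (2 ^ (a * k)) < ∞ := by
  simp_rw [ofReal_two_rpow_mul_pow, ENNReal.tsum_geometric]
  have : ENNReal.ofReal ((2 : ℝ) ^ a) < 1 := by
    rw [ENNReal.ofReal_lt_one]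
    exact Real.rpow_lt_one_of_one_lt_of_neg one_lt_two ha
  exact ENNReal.inv_lt_top.2 (tsub_pos_of_lt this)

lemma eLpNorm_const_mul_le {c : ℝ≥0∞} (hc : c ≠ ∞) (u : X → ℝ≥0∞) (q : ℝ≥0∞) :
    eLpNorm (fun x ↦ c * u x) q μ ≤ c * eLpNorm u q μ := by
  lift c to ℝ≥0 using hc
  exact eLpNorm_le_nnreal_smul_eLpNorm_of_ae_le_mul' (.of_forall fun _ ↦ le_rfl) q

lemma eLpNorm_const_mul_le_of_aemeasurable (c : ℝ≥0∞) {u : X → ℝ≥0∞} (hu : AEMeasurable u μ)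
    (q : ℝ≥0∞) :
    eLpNorm (fun x ↦ c * u x) q μ ≤ c * eLpNorm u q μ := by
  refine (eLpNorm_mul_le_mul_eLpNorm ∞ q q aemeasurable_const hu).trans ?_
  gcongr
  exact essSup_le_of_ae_le _ (.of_forall fun _ ↦ le_rfl)

lemma tsum_eLpNorm_rescaled_le {q A : ℝ≥0∞} {u : ℕ → X → ℝ≥0∞} {a : ℝ} (δ : ℝ)
    (hu : ∀ k : ℕ, eLpNorm (u k) q μ ≤ A * ENNReal.ofReal (2 ^ (a * k))) :
    ∑' k : ℕ, eLpNorm (fun x ↦ ENNReal.ofReal (2 ^ ((δ - a) * k)) * u k x) q μ ≤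
      A * ∑' k : ℕ, ENNReal.ofReal (2 ^ (δ * k)) := by
  rw [← ENNReal.tsum_mul_left]
  gcongr with k
  calc
    _ ≤ ENNReal.ofReal (2 ^ ((δ - a) * k)) * (A * ENNReal.ofReal (2 ^ (a * k))) :=
      (eLpNorm_const_mul_le ENNReal.ofReal_ne_top _ _).trans (by gcongr; exact hu k)
    _ = A * ENNReal.ofReal (2 ^ (δ * k)) := by
      rw [mul_left_comm, ← ENNReal.ofReal_mul (by positivity), ← Real.rpow_add two_pos]
      ring_nf

/-- Only the sum of the three growth rates matters: before the triangle inequality is used, the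
factors are rescaled so that all three of them decay at the rate `2 ^ (δ * k)`. -/
lemma eLpNorm_tsum_mul_mul_le_of_dyadic {r p q₁ q₂ A B C : ℝ≥0∞} (hp : 1 ≤ p) (hq₁ : 1 ≤ q₁)
    (hq₂ : 1 ≤ q₂) (hr : r⁻¹ = p⁻¹ + q₁⁻¹ + q₂⁻¹) {a b c δ : ℝ} (hδ : a + b + c = 3 * δ)
    {u v w : ℕ → X → ℝ≥0∞} (hu : ∀ k, AEMeasurable (u k) μ)
    (hv : ∀ k, AEMeasurable (v k) μ) (hw : ∀ k, AEMeasurable (w k) μ)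
    (hA : ∀ k : ℕ, eLpNorm (u k) p μ ≤ A * ENNReal.ofReal (2 ^ (a * k)))
    (hB : ∀ k : ℕ, eLpNorm (v k) q₁ μ ≤ B * ENNReal.ofReal (2 ^ (b * k)))
    (hC : ∀ k : ℕ, eLpNorm (w k) q₂ μ ≤ C * ENNReal.ofReal (2 ^ (c * k))) :
    eLpNorm (fun x ↦ ∑' k, u k x * (v k x * w k x)) r μ ≤
      (∑' k : ℕ, ENNReal.ofReal (2 ^ (δ * k))) ^ 3 * (A * B * C) := by
  have hcancel (k : ℕ) : ENNReal.ofReal (2 ^ ((δ - a) * k)) *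
      (ENNReal.ofReal (2 ^ ((δ - b) * k)) * ENNReal.ofReal (2 ^ ((δ - c) * k))) = 1 := by
    rw [← ENNReal.ofReal_mul (by positivity), ← ENNReal.ofReal_mul (by positivity),
      ← Real.rpow_add two_pos, ← Real.rpow_add two_pos, ← ENNReal.ofReal_one]
    congr 1
    rw [show (δ - a) * k + ((δ - b) * k + (δ - c) * k) = (3 * δ - (a + b + c)) * k by ring]
    simp [hδ]
  have hrescale (k : ℕ) (x : X) : u k x * (v k x * w k x) =
      ENNReal.ofReal (2 ^ ((δ - a) * k)) * u k x * (ENNReal.ofReal (2 ^ ((δ - b) * k)) * v k x *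
        (ENNReal.ofReal (2 ^ ((δ - c) * k)) * w k x)) := by
    rw [← one_mul (u k x * _), ← hcancel k]
    ring
  simp_rw [hrescale]
  refine (eLpNorm_tsum_mul_mul_le hp hq₁ hq₂ hr (fun k ↦ (hu k).const_mul _)
    (fun k ↦ (hv k).const_mul _) fun k ↦ (hw k).const_mul _).trans ?_
  refine (mul_le_mul' (tsum_eLpNorm_rescaled_le δ hA) (mul_le_mul'
    (tsum_eLpNorm_rescaled_le δ hB) (tsum_eLpNorm_rescaled_le δ hC))).trans_eq ?_
  ring

lemma ae_ae_swap_of_nullMeasurableSet [SFinite μ] [SFinite ν] {P : X → Y → Prop}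
    (hP : NullMeasurableSet {z | P z.1 z.2} (μ.prod ν)) (h : ∀ᵐ y ∂ν, ∀ᵐ x ∂μ, P x y) :
    ∀ᵐ x ∂μ, ∀ᵐ y ∂ν, P x y := by
  obtain ⟨S, hPS, hS, hS_eq⟩ := hP.exists_measurable_superset_ae_eq
  have hS_ae : ∀ᵐ x ∂μ, ∀ᵐ y ∂ν, (x, y) ∈ S := by
    rw [Measure.ae_ae_comm (p := fun x y ↦ (x, y) ∈ S) hS]
    filter_upwards [h] with y hy
    filter_upwards [hy] with x hx using hPS hx
  filter_upwards [hS_ae, Measure.ae_ae_of_ae_prod hS_eq.mem_iff] with x hx hx_iff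
  filter_upwards [hx, hx_iff] with y hy hy_iff using hy_iff.1 hy

lemma eLpNorm_eLpNorm_self_le [SFinite μ] [SFinite ν] {E : Type*} [NormedAddCommGroup E]
    {p C : ℝ≥0∞} {B : X → Y → E} (hB : AEStronglyMeasurable (Function.uncurry B) (μ.prod ν))
    (hC : ∀ᵐ y ∂ν, eLpNorm (B · y) p μ ≤ C) :
    eLpNorm (fun x ↦ eLpNorm (B x) p ν) p μ ≤ C * ν Set.univ ^ (1 / p.toReal) := by
  obtain rfl | rfl | hp := ENNReal.trichotomy p
  · simp
  · have hbound : ∀ᵐ x ∂μ, ∀ᵐ y ∂ν, ‖B x y‖ₑ ≤ C :=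
      ae_ae_swap_of_nullMeasurableSet (nullMeasurableSet_le hB.enorm aemeasurable_const)
        (hC.mono fun y hy ↦ ae_le_eLpNormEssSup.mono fun x hx ↦ hx.trans hy)
    refine essSup_le_of_ae_le _ ?_
    filter_upwards [hbound] with x hx
    simpa using eLpNormEssSup_le_of_ae_enorm_bound hx
  obtain ⟨hp₀, hp_top⟩ := ENNReal.toReal_pos_iff.mp hp
  simp only [eLpNorm_eq_lintegral_rpow_enorm_toReal hp₀.ne' hp_top.ne, enorm_eq_self, one_div,
    ENNReal.rpow_inv_rpow hp.ne'] at hC ⊢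
  rw [lintegral_lintegral_swap (hB.enorm.pow_const _), ENNReal.rpow_inv_le_iff hp,
    ENNReal.mul_rpow_of_nonneg _ _ hp.le, ENNReal.rpow_inv_rpow hp.ne', ← lintegral_const]
  exact lintegral_mono_ae (hC.mono fun y hy ↦ (ENNReal.rpow_inv_le_iff hp).1 hy)

lemma one_div_toReal_sub_one_div_toReal_nonneg {s t : ℝ≥0∞} (hs : s ≠ 0) (hst : s ≤ t) :
    0 ≤ 1 / s.toReal - 1 / t.toReal := by
  simpa [← ENNReal.toReal_inv] using ENNReal.toReal_mono (by simpa) (ENNReal.inv_le_inv.2 hst)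

lemma eLpNorm_eLpNorm_le [SFinite μ] [IsFiniteMeasure ν] {E : Type*} [NormedAddCommGroup E]
    {t p C : ℝ≥0∞} (ht : t ≠ 0) (htp : t ≤ p) {B : X → Y → E}
    (hB : AEStronglyMeasurable (Function.uncurry B) (μ.prod ν))
    (hC : ∀ᵐ y ∂ν, eLpNorm (B · y) p μ ≤ C) :
    eLpNorm (fun x ↦ eLpNorm (B x) t ν) p μ ≤ C * ν Set.univ ^ (1 / t.toReal) := by
  have hexp := one_div_toReal_sub_one_div_toReal_nonneg ht htp
  have hmono : ∀ᵐ x ∂μ, eLpNorm (B x) t ν ≤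
      ν Set.univ ^ (1 / t.toReal - 1 / p.toReal) * eLpNorm (B x) p ν := by
    filter_upwards [hB.prodMk_left] with x hx
    rw [mul_comm]
    exact eLpNorm_le_eLpNorm_mul_rpow_measure_univ htp hx
  calc
    _ ≤ ν Set.univ ^ (1 / t.toReal - 1 / p.toReal) * eLpNorm (fun x ↦ eLpNorm (B x) p ν) p μ :=
      (eLpNorm_mono_enorm_ae hmono).trans <| eLpNorm_const_mul_le
        (ENNReal.rpow_ne_top_of_nonneg hexp (measure_ne_top ν _)) _ _
    _ ≤ ν Set.univ ^ (1 / t.toReal - 1 / p.toReal) * (C * ν Set.univ ^ (1 / p.toReal)) := by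
      gcongr
      exact eLpNorm_eLpNorm_self_le hB hC
    _ = C * ν Set.univ ^ (1 / t.toReal) := by
      rw [mul_left_comm, ← ENNReal.rpow_add_of_nonneg _ _ hexp (by positivity), sub_add_cancel]

lemma aemeasurable_eLpNorm_section [SFinite ν] {E : Type*} [NormedAddCommGroup E] {t : ℝ≥0∞}
    (ht : t ≠ ∞) {B : X → Y → E} (hB : AEStronglyMeasurable (Function.uncurry B) (μ.prod ν)) :
    AEMeasurable (fun x ↦ eLpNorm (B x) t ν) μ := by
  obtain rfl | ht₀ := eq_or_ne t 0
  · simp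
  simp only [eLpNorm_eq_lintegral_rpow_enorm_toReal ht₀ ht]
  exact (hB.enorm.pow_const t.toReal).lintegral_prod_right'.pow_const _

lemma aestronglyMeasurable_uncurry_of_continuous [TopologicalSpace Y]
    [TopologicalSpace.PseudoMetrizableSpace Y] [SecondCountableTopology Y] [OpensMeasurableSpace Y]
    {E : Type*} [TopologicalSpace E] [TopologicalSpace.PseudoMetrizableSpace E]
    [SecondCountableTopology E] {A : X → Y → E} (hcont : ∀ x, Continuous (A x))
    (hmeas : ∀ y, AEStronglyMeasurable (A · y) μ) :
    AEStronglyMeasurable (Function.uncurry A) (μ.prod ν) := by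
  borelize E
  have hid : StronglyMeasurable (id : Y → Y) := stronglyMeasurable_id
  have hlim (z : X × Y) : Filter.Tendsto (fun n ↦ A z.1 (hid.approx n z.2)) Filter.atTop
      (nhds (A z.1 z.2)) :=
    ((hcont z.1).tendsto z.2).comp (hid.tendsto_approx z.2)
  refine aestronglyMeasurable_of_tendsto_ae Filter.atTop (fun n ↦ ?_) (.of_forall hlim)
  have hmk_meas : Measurable fun z : X × Y ↦ (hmeas (hid.approx n z.2)).mk (A · _) z.1 :=
    ((hid.approx n).comp Prod.snd measurable_snd).measurable_bind
      (fun y z ↦ (hmeas y).mk (A · y) z.1)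
      fun y ↦ (hmeas y).stronglyMeasurable_mk.measurable.comp measurable_fst
  have hmk_ae : ∀ᵐ x ∂μ, ∀ y ∈ (hid.approx n).range, A x y = (hmeas y).mk (A · y) x :=
    (ae_ball_iff (hid.approx n).range.countable_toSet).2 fun y _ ↦ (hmeas y).ae_eq_mk
  refine ⟨_, hmk_meas.stronglyMeasurable, ?_⟩
  filter_upwards [Measure.quasiMeasurePreserving_fst.ae hmk_ae] with z hz
  exact hz _ (SimpleFunc.mem_range_self _ _)

end Lp

lemma lintegral_Ioc_ofReal_rpow {a T : ℝ} (ha : -1 < a) (hT : 0 ≤ T) :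
    ∫⁻ t in Set.Ioc 0 T, ENNReal.ofReal (t ^ a) = ENNReal.ofReal (T ^ (a + 1) / (a + 1)) := by
  rw [← ofReal_integral_eq_lintegral_ofReal
    ((intervalIntegrable_iff_integrableOn_Ioc_of_le hT).1
      (intervalIntegral.intervalIntegrable_rpow' ha))
    (ae_restrict_of_forall_mem measurableSet_Ioc fun t ht ↦ Real.rpow_nonneg ht.1.le a),
    ← intervalIntegral.integral_of_le hT, integral_rpow (.inl ha),
    Real.zero_rpow (by linarith), sub_zero]

lemma lintegral_cut_le {s q B F : ℝ} (hsq : s.HolderConjugate q) (hq : 2 < q) (hB : 0 < B)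
    (hF : 0 ≤ F) :
    ∫⁻ t in Set.Ioi (0 : ℝ), {t | t * F ^ (s - 1) ≤ B}.indicator
      (fun t ↦ ENNReal.ofReal (t ^ (q - 3)) * ENNReal.ofReal (F ^ 2)) t ≤
      ENNReal.ofReal (B ^ (q - 2) / (q - 2)) * ENNReal.ofReal (F ^ s) := by
  obtain rfl | hF := hF.eq_or_lt
  · simp
  have hset : {t | t * F ^ (s - 1) ≤ B} = Set.Iic (B * F ^ (1 - s)) := by
    ext t
    rw [Set.mem_ofPred_eq, Set.mem_Iic, ← le_div_iff₀ (by positivity), ← neg_sub s 1,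
      Real.rpow_neg hF.le, div_eq_mul_inv]
  rw [hset, lintegral_indicator measurableSet_Iic, Measure.restrict_restrict measurableSet_Iic,
    Set.inter_comm, Set.Ioi_inter_Iic, lintegral_mul_const _ (by fun_prop),
    lintegral_Ioc_ofReal_rpow (by linarith) (by positivity),
    ← ENNReal.ofReal_mul (div_nonneg (by positivity) (by linarith)),
    ← ENNReal.ofReal_mul (div_nonneg (by positivity) (by linarith))]
  have hexp : (1 - s) * (q - 2) + 2 = s := by linarith [hsq.mul_eq_add]
  refine (congrArg ENNReal.ofReal ?_).le
  rw [show q - 3 + 1 = q - 2 by ring, Real.mul_rpow hB.le (by positivity), ← Real.rpow_mul hF.le,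
    ← Real.rpow_natCast F 2, div_mul_eq_mul_div, mul_assoc, ← Real.rpow_add hF, Nat.cast_ofNat,
    hexp, mul_div_right_comm]

lemma lintegral_rpow_le_of_meas_lt_le {X Y : Type*} [MeasurableSpace X] [MeasurableSpace Y]
    {μ : Measure X} {ν : Measure Y} [SFinite μ] {F : X → ℝ} {G : Y → ℝ} (hF : Measurable F)
    (hF₀ : 0 ≤ F) (hG : AEMeasurable G ν) (hG₀ : 0 ≤ G) {s q B : ℝ} (hsq : s.HolderConjugate q)
    (hq : 2 < q) (hB : 0 < B)
    (hFG : ∀ t > 0, ν {y | t < G y} ≤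
      ENNReal.ofReal (t ^ (-2 : ℝ)) *
        ∫⁻ x in {x | t * F x ^ (s - 1) ≤ B}, ENNReal.ofReal (F x ^ 2) ∂μ) :
    ∫⁻ y, ENNReal.ofReal (G y ^ q) ∂ν ≤ ENNReal.ofReal q *
      (ENNReal.ofReal (B ^ (q - 2) / (q - 2)) * ∫⁻ x, ENNReal.ofReal (F x ^ s) ∂μ) := by
  rw [lintegral_rpow_eq_lintegral_meas_lt_mul ν (.of_forall hG₀) hG (by linarith)]
  gcongr
  let K (t : ℝ) (x : X) : ℝ≥0∞ := {t | t * F x ^ (s - 1) ≤ B}.indicator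
      (fun t ↦ ENNReal.ofReal (t ^ (q - 3)) * ENNReal.ofReal (F x ^ 2)) t
  have hK : Measurable (Function.uncurry K) := by
    have hset : MeasurableSet {z : ℝ × X | z.1 * F z.2 ^ (s - 1) ≤ B} :=
      measurableSet_le (by fun_prop) measurable_const
    exact Measurable.indicator (by fun_prop) hset
  calc
    _ ≤ ∫⁻ t in Set.Ioi (0 : ℝ), ∫⁻ x, K t x ∂μ := by
      refine setLIntegral_mono' measurableSet_Ioi fun t ht ↦ ?_
      have hset : MeasurableSet {x | t * F x ^ (s - 1) ≤ B} :=
        measurableSet_le (by fun_prop) measurable_const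
      have hrate : t ^ (-2 : ℝ) * t ^ (q - 1) = t ^ (q - 3) := by
        rw [← Real.rpow_add ht]
        ring_nf
      calc
        _ ≤ _ := mul_le_mul_left (hFG t ht) _
        _ = ENNReal.ofReal (t ^ (q - 3)) *
            ∫⁻ x in {x | t * F x ^ (s - 1) ≤ B}, ENNReal.ofReal (F x ^ 2) ∂μ := by
          rw [mul_right_comm, ← ENNReal.ofReal_mul (Real.rpow_nonneg (le_of_lt ht) _), hrate]
        _ = ∫⁻ x, K t x ∂μ := by
          rw [← lintegral_const_mul' _ _ ENNReal.ofReal_ne_top, ← lintegral_indicator hset]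
          rfl
    _ = ∫⁻ x, (∫⁻ t in Set.Ioi (0 : ℝ), K t x) ∂μ :=
      lintegral_lintegral_swap hK.aemeasurable
    _ ≤ ∫⁻ x, ENNReal.ofReal (B ^ (q - 2) / (q - 2)) * ENNReal.ofReal (F x ^ s) ∂μ :=
      lintegral_mono fun x ↦ lintegral_cut_le hsq hq hB (hF₀ x)
    _ = _ := lintegral_const_mul' _ _ ENNReal.ofReal_ne_top

lemma setLIntegral_enorm_compl_cut_le {X E : Type*} [MeasurableSpace X] [NormedAddCommGroup E]
    {μ : Measure X} {f : X → E} {s B t : ℝ} (hs : 1 < s) (hB : 0 < B) (ht : 0 < t)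
    (hf : Measurable fun x ↦ ‖f x‖)
    (hfB : ∫⁻ x, ENNReal.ofReal (‖f x‖ ^ s) ∂μ ≤ ENNReal.ofReal B) :
    ∫⁻ x in {x | t * ‖f x‖ ^ (s - 1) ≤ B}ᶜ, ‖f x‖ₑ ∂μ ≤ ENNReal.ofReal t := by
  have hS : MeasurableSet {x | t * ‖f x‖ ^ (s - 1) ≤ B} :=
    measurableSet_le ((hf.pow_const _).const_mul t) measurable_const
  calc
    _ ≤ ∫⁻ x in {x | t * ‖f x‖ ^ (s - 1) ≤ B}ᶜ,
        ENNReal.ofReal (t / B) * ENNReal.ofReal (‖f x‖ ^ s) ∂μ := by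
      refine setLIntegral_mono' hS.compl fun x hx ↦ ?_
      rw [← ENNReal.ofReal_mul (by positivity), ← ofReal_norm]
      refine ENNReal.ofReal_le_ofReal ?_
      have hx' : B < t * ‖f x‖ ^ (s - 1) := not_le.1 hx
      have hpos : 0 < ‖f x‖ := by
        refine (norm_nonneg _).lt_of_ne fun h0 ↦ ?_
        rw [← h0, Real.zero_rpow (sub_pos.2 hs).ne', mul_zero] at hx'
        exact hx'.not_gt hB
      rw [div_mul_eq_mul_div, le_div_iff₀ hB, ← sub_add_cancel s 1, Real.rpow_add_one hpos.ne',
        mul_comm ‖f x‖, ← mul_assoc]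
      gcongr
    _ ≤ ENNReal.ofReal (t / B) * ENNReal.ofReal B := by
      rw [lintegral_const_mul' _ _ ENNReal.ofReal_ne_top]
      gcongr
      exact (setLIntegral_le_lintegral _ _).trans hfB
    _ = ENNReal.ofReal t := by
      rw [← ENNReal.ofReal_mul (by positivity), div_mul_cancel₀ _ hB.ne']

section Fourier

open FourierTransform

variable {V E : Type*} [NormedAddCommGroup V] [InnerProductSpace ℝ V] [FiniteDimensional ℝ V]
  [MeasurableSpace V] [BorelSpace V] [NormedAddCommGroup E] [InnerProductSpace ℂ E]
  {f : V → E}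

lemma continuous_fourier (hf : Integrable f) : Continuous (𝓕 f) :=
  VectorFourier.fourierIntegral_continuous Real.continuous_fourierChar
    (L := innerₗ V) continuous_inner hf

lemma enorm_fourier_le_lintegral (f : V → E) (ξ : V) : ‖𝓕 f ξ‖ₑ ≤ ∫⁻ x, ‖f x‖ₑ := by
  rw [Real.fourier_eq]
  exact (enorm_integral_le_lintegral_enorm _).trans_eq
    (by simp_rw [← ofReal_norm, Circle.norm_smul])

lemma fourier_add_of_integrable {f g : V → E} (hf : Integrable f) (hg : Integrable g) :
    𝓕 (f + g) = 𝓕 f + 𝓕 g :=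
  VectorFourier.fourierIntegral_add Real.continuous_fourierChar continuous_inner hf hg

lemma fourier_eq_zero_of_eLpNorm_eq_zero {s : ℝ≥0∞} (hs : s ≠ 0) (hf : Integrable f)
    (h : eLpNorm f s volume = 0) : 𝓕 f = 0 := by
  have hf₀ := (eLpNorm_eq_zero_iff hf.aestronglyMeasurable hs).1 h
  ext ξ
  rw [Real.fourier_eq, Pi.zero_apply]
  exact integral_eq_zero_of_ae (hf₀.mono fun x hx ↦ by simp [hx])

variable [CompleteSpace E]

lemma integral_smul_fourier_eq {φ : V → ℂ} (hφ : Integrable φ) (hf : Integrable f) :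
    ∫ ξ, φ ξ • 𝓕 f ξ = ∫ x, 𝓕 φ x • f x := by
  have := VectorFourier.integral_fourierIntegral_smul_eq_flip (L := innerₗ V)
    Real.continuous_fourierChar continuous_inner hφ hf
  rw [flip_innerₗ] at this
  exact this.symm

lemma fourier_ae_eq_fourier_toLp (hf : Integrable f) (hf₂ : MemLp f 2) :
    𝓕 f =ᵐ[volume] (𝓕 (hf₂.toLp f) : Lp E 2 (volume : Measure V)) := by
  refine ae_eq_of_integral_contDiff_smul_eq (continuous_fourier hf).locallyIntegrable
    ((Lp.memLp _).locallyIntegrable one_le_two) fun g hg hg_supp ↦ ?_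
  have hg_supp' : HasCompactSupport fun x ↦ (g x : ℂ) := hg_supp.comp_left Complex.ofReal_zero
  let φ : 𝓢(V, ℂ) := hg_supp'.toSchwartzMap (ofRealCLM.contDiff.comp hg)
  calc
    ∫ ξ, g ξ • 𝓕 f ξ = ∫ x, 𝓕 (φ : V → ℂ) x • f x :=
      integral_smul_fourier_eq (φ.integrable (μ := volume)) hf
    _ = ∫ x, 𝓕 φ x • hf₂.toLp f x := by
      refine integral_congr_ae ?_
      filter_upwards [hf₂.coeFn_toLp] with x hx
      rw [hx, SchwartzMap.fourier_coe]
    _ = ∫ ξ, φ ξ • (𝓕 (hf₂.toLp f) : Lp E 2 (volume : Measure V)) ξ := by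
      rw [← Lp.toTemperedDistribution_apply, ← Lp.toTemperedDistribution_apply,
        ← TemperedDistribution.fourier_apply, Lp.fourier_toTemperedDistribution_eq]

lemma eLpNorm_fourier_two (hf : Integrable f) (hf₂ : MemLp f 2) :
    eLpNorm (𝓕 f) 2 volume = eLpNorm f 2 volume := by
  rw [eLpNorm_congr_ae (fourier_ae_eq_fourier_toLp hf hf₂), ← eLpNorm_congr_ae hf₂.coeFn_toLp]
  simpa only [← Lp.enorm_def, enorm_eq_iff_norm_eq] using Lp.norm_fourier_eq _

lemma volume_lt_enorm_fourier_le (hf : Integrable f) (hf₂ : MemLp f 2) {t : ℝ≥0∞} (ht : t ≠ 0)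
    {S : Set V} (hS : MeasurableSet S) (hSc : ∫⁻ x in Sᶜ, ‖f x‖ₑ ≤ t) :
    volume {ξ | 2 * t < ‖𝓕 f ξ‖ₑ} ≤ t⁻¹ ^ 2 * ∫⁻ x in S, ‖f x‖ₑ ^ 2 := by
  have hsplit (ξ : V) : ‖𝓕 f ξ‖ₑ ≤ ‖𝓕 (S.indicator f) ξ‖ₑ + t := by
    conv_lhs => rw [← Set.indicator_self_add_compl S f,
      fourier_add_of_integrable (hf.indicator hS) (hf.indicator hS.compl)]
    refine (enorm_add_le _ _).trans (add_le_add_right ((enorm_fourier_le_lintegral _ _).trans ?_) _)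
    simpa only [enorm_indicator_eq_indicator_enorm, lintegral_indicator hS.compl] using hSc
  calc
    _ ≤ volume {ξ | t ≤ ‖𝓕 (S.indicator f) ξ‖ₑ} := by
      refine measure_mono fun ξ hξ ↦ ?_
      by_contra hsmall
      refine (lt_of_lt_of_le hξ (hsplit ξ)).not_ge ?_
      rw [two_mul]
      exact add_le_add_left (not_le.1 hsmall).le t
    _ ≤ t⁻¹ ^ 2 * eLpNorm (𝓕 (S.indicator f)) 2 volume ^ 2 := by
      simpa using meas_ge_le_mul_pow_eLpNorm_enorm volume two_ne_zero ENNReal.ofNat_ne_top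
        (continuous_fourier (hf.indicator hS)).aestronglyMeasurable ht (by simp)
    _ = t⁻¹ ^ 2 * ∫⁻ x in S, ‖f x‖ₑ ^ 2 := by
      rw [eLpNorm_fourier_two (hf.indicator hS) (hf₂.indicator hS),
        eLpNorm_indicator_eq_eLpNorm_restrict hS]
      simpa using congrArg (t⁻¹ ^ 2 * ·)
        (eLpNorm_nnreal_pow_eq_lintegral (f := f) (μ := volume.restrict S) two_ne_zero)

lemma lintegral_half_norm_fourier_rpow_le {s q B : ℝ} (hsq : s.HolderConjugate q) (hq : 2 < q)
    (hB : 0 < B) (hf : Integrable f) (hf₂ : MemLp f 2) (hf_meas : StronglyMeasurable f)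
    (hfB : ∫⁻ x, ENNReal.ofReal (‖f x‖ ^ s) ≤ ENNReal.ofReal B) :
    ∫⁻ ξ, ENNReal.ofReal ((‖𝓕 f ξ‖ / 2) ^ q) ≤ ENNReal.ofReal (q / (q - 2) * B ^ (q - 1)) := by
  refine (lintegral_rpow_le_of_meas_lt_le (μ := volume) (ν := volume) (F := fun x ↦ ‖f x‖)
    (G := fun ξ ↦ ‖𝓕 f ξ‖ / 2) hf_meas.norm.measurable
    (fun x ↦ norm_nonneg _) ((continuous_fourier hf).norm.div_const 2).measurable.aemeasurable
    (fun ξ ↦ by positivity) hsq hq hB fun t ht ↦ ?_).trans ?_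
  · have hS : MeasurableSet {x | t * ‖f x‖ ^ (s - 1) ≤ B} :=
      measurableSet_le ((hf_meas.norm.measurable.pow_const _).const_mul t) measurable_const
    have hlarge := setLIntegral_enorm_compl_cut_le hsq.lt hB ht hf_meas.norm.measurable hfB
    have hset : {ξ | t < ‖𝓕 f ξ‖ / 2} = {ξ | 2 * ENNReal.ofReal t < ‖𝓕 f ξ‖ₑ} := by
      ext ξ
      rw [Set.mem_ofPred_eq, Set.mem_ofPred_eq, lt_div_iff₀' two_pos, ← ofReal_norm,
        ← ENNReal.ofReal_ofNat, ← ENNReal.ofReal_mul two_pos.le,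
        ENNReal.ofReal_lt_ofReal_iff_of_nonneg (by positivity)]
    have hrate : ENNReal.ofReal (t ^ (-2 : ℝ)) = (ENNReal.ofReal t)⁻¹ ^ 2 := by
      rw [Real.rpow_neg ht.le, ENNReal.ofReal_inv_of_pos (by positivity), Real.rpow_ofNat,
        ENNReal.ofReal_pow ht.le, ENNReal.inv_pow]
    rw [hset, hrate]
    simpa only [ENNReal.ofReal_pow (norm_nonneg _), ofReal_norm] using
      volume_lt_enorm_fourier_le hf hf₂ (ENNReal.ofReal_pos.2 ht).ne' hS hlarge
  · calc
      _ ≤ ENNReal.ofReal q * (ENNReal.ofReal (B ^ (q - 2) / (q - 2)) * ENNReal.ofReal B) := by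
        gcongr
      _ = _ := by
        have : 0 < q - 2 := sub_pos.2 hq
        rw [← ENNReal.ofReal_mul (by positivity), ← ENNReal.ofReal_mul (by positivity),
          show q - 1 = q - 2 + 1 by ring, Real.rpow_add_one hB.ne']
        ring_nf

lemma lintegral_enorm_fourier_rpow_le {s q : ℝ} (hsq : s.HolderConjugate q) (hq : 2 < q)
    (hf : Integrable f) (hf₂ : MemLp f 2) (hf_meas : StronglyMeasurable f) :
    ∫⁻ ξ, ‖𝓕 f ξ‖ₑ ^ q ≤
      2 ^ q * (ENNReal.ofReal (q / (q - 2)) * (∫⁻ x, ‖f x‖ₑ ^ s) ^ (q - 1)) := by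
  have hc : 0 < q / (q - 2) := div_pos hsq.symm.pos (sub_pos.2 hq)
  have hq₁ : 0 < q - 1 := sub_pos.2 hsq.symm.lt
  obtain hI₀ | hI₀ := eq_or_ne (∫⁻ x, ‖f x‖ₑ ^ s) 0
  · have hnorm : eLpNorm f (.ofReal s) volume = 0 := by
      rw [eLpNorm_eq_lintegral_rpow_enorm_toReal (ENNReal.ofReal_pos.2 hsq.pos).ne'
        ENNReal.ofReal_ne_top, ENNReal.toReal_ofReal hsq.nonneg, hI₀,
        ENNReal.zero_rpow_of_pos (one_div_pos.2 hsq.pos)]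
    rw [fourier_eq_zero_of_eLpNorm_eq_zero (ENNReal.ofReal_pos.2 hsq.pos).ne' hf hnorm]
    simp [hsq.symm.pos]
  obtain hI_top | hI_top := eq_or_ne (∫⁻ x, ‖f x‖ₑ ^ s) ∞
  · rw [hI_top, ENNReal.top_rpow_of_pos hq₁, ENNReal.mul_top (ENNReal.ofReal_pos.2 hc).ne',
      ENNReal.mul_top (ENNReal.rpow_pos two_pos ENNReal.ofNat_ne_top).ne']
    exact le_top
  have hB : 0 < (∫⁻ x, ‖f x‖ₑ ^ s).toReal := ENNReal.toReal_pos hI₀ hI_top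
  have hfB : ∫⁻ x, ENNReal.ofReal (‖f x‖ ^ s) ≤ .ofReal (∫⁻ x, ‖f x‖ₑ ^ s).toReal := by
    rw [ENNReal.ofReal_toReal hI_top]
    simp_rw [← ENNReal.ofReal_rpow_of_nonneg (norm_nonneg _) hsq.nonneg, ofReal_norm, le_refl]
  have hhalf (ξ : V) : ‖𝓕 f ξ‖ₑ ^ q = 2 ^ q * ENNReal.ofReal ((‖𝓕 f ξ‖ / 2) ^ q) := by
    rw [← ENNReal.ofReal_rpow_of_nonneg (by positivity) hsq.symm.nonneg,
      ← ENNReal.mul_rpow_of_nonneg _ _ hsq.symm.nonneg, ← ENNReal.ofReal_ofNat,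
      ← ENNReal.ofReal_mul two_pos.le, mul_div_cancel₀ _ two_ne_zero, ofReal_norm]
  simp_rw [hhalf]
  rw [lintegral_const_mul' _ _ (ENNReal.rpow_ne_top_of_nonneg hsq.symm.nonneg ENNReal.ofNat_ne_top)]
  gcongr
  refine (lintegral_half_norm_fourier_rpow_le hsq hq hB hf hf₂ hf_meas hfB).trans_eq ?_
  rw [ENNReal.ofReal_mul hc.le, ← ENNReal.ofReal_rpow_of_pos hB, ENNReal.ofReal_toReal hI_top]

lemma eLpNorm_fourier_le_of_two_lt {s q : ℝ} (hsq : s.HolderConjugate q) (hq : 2 < q)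
    (hf : Integrable f) (hf₂ : MemLp f 2) (hf_meas : StronglyMeasurable f) :
    eLpNorm (𝓕 f) (.ofReal q) volume ≤
      2 * ENNReal.ofReal (q / (q - 2)) ^ (1 / q) * eLpNorm f (.ofReal s) volume := by
  have hq₀ : 0 ≤ 1 / q := one_div_nonneg.2 hsq.symm.nonneg
  have hexp : (q - 1) * (1 / q) = 1 / s := by
    rw [sub_mul, mul_one_div_cancel hsq.symm.ne_zero, one_mul, one_div, one_div,
      hsq.symm.one_sub_inv]
  rw [eLpNorm_eq_lintegral_rpow_enorm_toReal (ENNReal.ofReal_pos.2 hsq.symm.pos).ne'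
    ENNReal.ofReal_ne_top, ENNReal.toReal_ofReal hsq.symm.nonneg,
    eLpNorm_eq_lintegral_rpow_enorm_toReal (ENNReal.ofReal_pos.2 hsq.pos).ne'
    ENNReal.ofReal_ne_top, ENNReal.toReal_ofReal hsq.nonneg]
  calc
    _ ≤ _ := ENNReal.rpow_le_rpow (lintegral_enorm_fourier_rpow_le hsq hq hf hf₂ hf_meas) hq₀
    _ = _ := by
      rw [ENNReal.mul_rpow_of_nonneg _ _ hq₀, ENNReal.mul_rpow_of_nonneg _ _ hq₀,
        ← ENNReal.rpow_mul, ← ENNReal.rpow_mul, hexp, mul_one_div_cancel hsq.symm.ne_zero,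
        ENNReal.rpow_one, mul_assoc]

theorem exists_eLpNorm_fourier_le {s q : ℝ≥0∞} (hsq : s.HolderConjugate q) (hs : s ≤ 2) :
    ∃ C : ℝ≥0∞, C ≠ ∞ ∧ ∀ f : V → E, Integrable f → MemLp f 2 →
      eLpNorm (𝓕 f) q volume ≤ C * eLpNorm f s volume := by
  obtain rfl | hs₁ := hsq.one_le.eq_or_lt
  · refine ⟨1, ENNReal.one_ne_top, fun f _ _ ↦ ?_⟩
    rw [hsq.symm.eq_top_iff_eq_one.2 rfl, one_mul, eLpNorm_one_eq_lintegral_enorm]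
    exact eLpNormEssSup_le_of_ae_enorm_bound (.of_forall (enorm_fourier_le_lintegral f))
  obtain rfl | hs₂ := hs.eq_or_lt
  · obtain rfl : q = 2 := ENNReal.HolderConjugate.unique 2 q 2
    exact ⟨1, ENNReal.one_ne_top, fun f hf hf₂ ↦ by rw [one_mul, eLpNorm_fourier_two hf hf₂]⟩
  have hq_top : q ≠ ∞ := hsq.symm.ne_top_iff_ne_one.2 hs₁.ne'
  have hs₁' : 1 < s.toReal := by simpa using ENNReal.toReal_strict_mono hs₂.ne_top hs₁
  have hs₂' : s.toReal < 2 := by simpa using ENNReal.toReal_strict_mono ENNReal.ofNat_ne_top hs₂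
  have hsq' : s.toReal.HolderConjugate q.toReal := hsq.toReal hs₁'
  have hq : 2 < q.toReal := by nlinarith [hsq'.mul_eq_add]
  refine ⟨2 * ENNReal.ofReal (q.toReal / (q.toReal - 2)) ^ (1 / q.toReal),
    ENNReal.mul_ne_top ENNReal.ofNat_ne_top
      (ENNReal.rpow_ne_top_of_nonneg (one_div_nonneg.2 hsq'.symm.nonneg) ENNReal.ofReal_ne_top),
    fun f hf hf₂ ↦ ?_⟩
  have hfg := hf.aestronglyMeasurable.ae_eq_mk
  have hfourier := eLpNorm_fourier_le_of_two_lt hsq' hq (hf.congr hfg) (hf₂.ae_eq hfg)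
    hf.aestronglyMeasurable.stronglyMeasurable_mk
  rwa [ENNReal.ofReal_toReal hs₂.ne_top, ENNReal.ofReal_toReal hq_top, ← eLpNorm_congr_ae hfg,
    ← funext (Real.fourier_congr_ae hfg)] at hfourier

end Fourier

section FourierEuclidean

open scoped FourierTransform

variable {n : ℕ} {f g : En n → ℂ}

/-- The pairing `⟨x, ξ⟩ / 2π`, for which Mathlib's normalisation `e^{-2πi⟨x, ξ⟩}` of the Fourier
integral turns into that of `ft`. -/
def scaledInner (n : ℕ) : En n →L[ℝ] En n →L[ℝ] ℝ := (2 * π)⁻¹ • innerSL ℝ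

lemma scaledInner_apply (x ξ : En n) : scaledInner n x ξ = (2 * π)⁻¹ * ⟪x, ξ⟫ := rfl

lemma flip_scaledInner : (scaledInner n).toLinearMap₁₂.flip = (scaledInner n).toLinearMap₁₂ := by
  ext x y
  simp [scaledInner_apply, real_inner_comm]

lemma ft_eq_fourierIntegral (f : En n → ℂ) :
    ft f = VectorFourier.fourierIntegral 𝐞 volume (scaledInner n).toLinearMap₁₂ f := by
  ext ξ
  refine integral_congr_ae (.of_forall fun y ↦ ?_)
  have harg : 2 * π * -((2 * π)⁻¹ * ⟪y, ξ⟫) = -⟪y, ξ⟫ := by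
    field_simp
  simp only [ContinuousLinearMap.toLinearMap₁₂_apply_apply_apply, scaledInner_apply,
    Circle.smul_def, Real.fourierChar_apply, harg, smul_eq_mul]
  congr 2
  push_cast
  ring

lemma continuous_ft (hf : Integrable f) : Continuous (ft f) := by
  rw [ft_eq_fourierIntegral]
  exact VectorFourier.fourierIntegral_continuous Real.continuous_fourierChar
    (scaledInner n).continuous₂ hf

lemma integral_mul_ft_eq (hf : Integrable f) (hg : Integrable g) :
    ∫ ξ, f ξ * ft g ξ = ∫ x, ft f x * g x := by
  have := VectorFourier.integral_fourierIntegral_smul_eq_flip (μ := volume) (ν := volume)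
    (L := (scaledInner n).toLinearMap₁₂) Real.continuous_fourierChar (scaledInner n).continuous₂
    hf hg
  rw [flip_scaledInner, ← ft_eq_fourierIntegral, ← ft_eq_fourierIntegral] at this
  exact this.symm

lemma ft_comp_add_left (f : En n → ℂ) (x ξ : En n) :
    ft (fun z ↦ f (x + z)) ξ = Complex.exp (I * ofReal ⟪x, ξ⟫) * ft f ξ := by
  unfold ft
  rw [← integral_const_mul]
  conv_rhs => rw [← integral_add_left_eq_self _ x]
  refine integral_congr_ae (.of_forall fun z ↦ ?_)
  dsimp only
  rw [← mul_assoc, ← Complex.exp_add, inner_add_left]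
  congr 2
  push_cast
  ring

lemma ft_fderiv_apply (hf : Integrable f) (hf' : Differentiable ℝ f)
    (hf'' : Integrable (fderiv ℝ f)) (v ξ : En n) :
    ft (fun x ↦ fderiv ℝ f x v) ξ = I * ofReal ⟪v, ξ⟫ * ft f ξ := by
  rw [ft_eq_fourierIntegral, ← Real.fourierIntegral_continuousLinearMap_apply' hf'',
    VectorFourier.fourierIntegral_fderiv _ hf hf' hf'', ← ft_eq_fourierIntegral]
  simp only [VectorFourier.fourierSMulRight_apply, neg_apply, ContinuousLinearMap.flip_apply,
    scaledInner_apply, neg_smul, real_smul, smul_eq_mul, ofReal_mul, ofReal_inv, ofReal_ofNat]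
  field_simp

lemma ft_eq_fourier (f : En n → ℂ) (ξ : En n) : ft f ξ = 𝓕 f ((2 * π)⁻¹ • ξ) := by
  rw [ft_eq_fourierIntegral]
  refine integral_congr_ae (.of_forall fun y ↦ ?_)
  simp [scaledInner_apply]

lemma exists_eLpNorm_ft_le {s q : ℝ≥0∞} (hsq : s.HolderConjugate q) (hs : s ≤ 2) :
    ∃ C : ℝ≥0∞, C ≠ ∞ ∧ ∀ f : En n → ℂ, Integrable f → MemLp f 2 →
      eLpNorm (ft f) q volume ≤ C * eLpNorm f s volume := by
  obtain ⟨C, hC, hfourier⟩ := exists_eLpNorm_fourier_le (V := En n) (E := ℂ) hsq hs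
  have hc : (2 * π)⁻¹ ≠ 0 := inv_ne_zero Real.two_pi_pos.ne'
  set D : ℝ≥0∞ := .ofReal |((2 * π)⁻¹ ^ Module.finrank ℝ (En n))⁻¹| with hD_def
  have hD : D ≠ 0 := by simp [hD_def, Real.pi_ne_zero]
  refine ⟨D ^ (1 / q).toReal * C, ENNReal.mul_ne_top (by simp [hD_def]) hC, fun f hf hf₂ ↦ ?_⟩
  have hscale : eLpNorm (ft f) q volume = D ^ (1 / q).toReal * eLpNorm (𝓕 f) q volume := by
    rw [show ft f = 𝓕 f ∘ ((2 * π)⁻¹ • ·) from funext (ft_eq_fourier f), ← eLpNorm_map_measure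
      (continuous_fourier hf).aestronglyMeasurable (by fun_prop), Measure.map_addHaar_smul _ hc,
      eLpNorm_smul_measure_of_ne_zero hD, smul_eq_mul]
  rw [hscale, mul_assoc]
  gcongr
  exact hfourier f hf hf₂

end FourierEuclidean

section DualMeasure

variable {n : ℕ}

/-- The symbol `∏ᵢ (1 + l² zᵢ²)` of the differential operator `∏ᵢ (1 - l² ∂ᵢ²)`. -/
def helmholtzSymbol (l : ℝ) (z : En n) : ℝ := ∏ i, (1 + l ^ 2 * z i ^ 2)

/-- The measure with density `∏ᵢ (1 + l² zᵢ²)⁻¹`. It averages over distances `|z| ≲ 1 / l`, the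
scale dual to frequency derivatives of size `l`. -/
def dualMeasure (n : ℕ) (l : ℝ) : Measure (En n) :=
  volume.withDensity fun z ↦ ENNReal.ofReal (helmholtzSymbol l z)⁻¹

lemma one_le_helmholtzSymbol (l : ℝ) (z : En n) : 1 ≤ helmholtzSymbol l z :=
  Finset.prod_induction _ (1 ≤ ·) (fun _ _ ↦ one_le_mul_of_one_le_of_one_le) le_rfl
    fun i _ ↦ le_add_of_nonneg_right (by positivity)

lemma helmholtzSymbol_pos (l : ℝ) (z : En n) : 0 < helmholtzSymbol l z :=
  one_pos.trans_le (one_le_helmholtzSymbol l z)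

lemma continuous_helmholtzSymbol (l : ℝ) : Continuous (helmholtzSymbol (n := n) l) := by
  unfold helmholtzSymbol
  fun_prop

lemma measurable_dualDensity (l : ℝ) :
    Measurable fun z : En n ↦ ENNReal.ofReal (helmholtzSymbol l z)⁻¹ :=
  (continuous_helmholtzSymbol l).measurable.inv.ennreal_ofReal

lemma dualMeasure_le_volume (l : ℝ) : dualMeasure n l ≤ volume := by
  refine (withDensity_mono (.of_forall fun z ↦ ?_)).trans_eq withDensity_one
  exact ENNReal.ofReal_le_one.2 (inv_le_one_of_one_le₀ (one_le_helmholtzSymbol l z))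

lemma dualMeasure_univ (n : ℕ) {l : ℝ} (hl : 0 < l) :
    dualMeasure n l Set.univ = ENNReal.ofReal ((π / l) ^ n) := by
  have hint : Integrable fun x : ℝ ↦ (1 + l ^ 2 * x ^ 2)⁻¹ := by
    simpa only [mul_pow] using integrable_inv_one_add_sq.comp_mul_left' hl.ne'
  have hint_eq : ∫ x : ℝ, (1 + l ^ 2 * x ^ 2)⁻¹ = π / l := by
    have := Measure.integral_comp_mul_left (fun x : ℝ ↦ (1 + x ^ 2)⁻¹) l
    rw [integral_univ_inv_one_add_sq, abs_of_pos (inv_pos.2 hl), smul_eq_mul,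
      ← div_eq_inv_mul] at this
    simpa only [mul_pow] using this
  have hprod := integral_fintype_prod_volume_eq_pow (ι := Fin n)
    fun x : ℝ ↦ (1 + l ^ 2 * x ^ 2)⁻¹
  rw [hint_eq, Fintype.card_fin] at hprod
  calc
    dualMeasure n l Set.univ = ∫⁻ z : En n, ENNReal.ofReal (helmholtzSymbol l z)⁻¹ := by
      rw [dualMeasure, withDensity_apply _ .univ, Measure.restrict_univ]
    _ = ∫⁻ x : Fin n → ℝ, ENNReal.ofReal (∏ i, (1 + l ^ 2 * x i ^ 2)⁻¹) := by
      rw [← (PiLp.volume_preserving_ofLp (Fin n)).lintegral_comp (by fun_prop)]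
      simp only [helmholtzSymbol, Finset.prod_inv_distrib]
    _ = ENNReal.ofReal ((π / l) ^ n) := by
      rw [← hprod, volume_pi,
        ofReal_integral_eq_lintegral_ofReal (.fintype_prod fun _ ↦ hint)]
      exact .of_forall fun x ↦ Finset.prod_nonneg fun i _ ↦ by positivity

lemma lintegral_dualMeasure (l : ℝ) {u : En n → ℝ≥0∞} (hu : AEMeasurable u) :
    ∫⁻ z, ENNReal.ofReal (helmholtzSymbol l z) * u z ∂dualMeasure n l = ∫⁻ z, u z := by
  have hsymbol : AEMeasurable fun z : En n ↦ ENNReal.ofReal (helmholtzSymbol l z) :=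
    (continuous_helmholtzSymbol l).measurable.ennreal_ofReal.aemeasurable
  refine (lintegral_withDensity_eq_lintegral_mul₀ (measurable_dualDensity l).aemeasurable
    (hsymbol.mul hu)).trans (lintegral_congr fun z ↦ ?_)
  rw [Pi.mul_apply, Pi.mul_apply, ← mul_assoc,
    ← ENNReal.ofReal_mul (inv_nonneg.2 (helmholtzSymbol_pos l z).le),
    inv_mul_cancel₀ (helmholtzSymbol_pos l z).ne', ENNReal.ofReal_one, one_mul]

lemma eLpNorm_le_mul_of_support_subset_closedBall {E F : Type*} [NormedAddCommGroup E]
    [MeasurableSpace E] {μ : Measure E} [NormedAddCommGroup F]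
    {s t : ℝ≥0∞} (hst : s ≤ t) {G : E → F} (hG : AEStronglyMeasurable G μ) {R : ℝ}
    (hsupp : Function.support G ⊆ Metric.closedBall 0 R) :
    eLpNorm G s μ ≤
      eLpNorm G t μ * μ (Metric.closedBall 0 R) ^ (1 / s.toReal - 1 / t.toReal) := by
  have hrestrict (r : ℝ≥0∞) : eLpNorm G r (μ.restrict (Metric.closedBall 0 R)) = eLpNorm G r μ :=
    eLpNorm_restrict_eq_of_support_subset hsupp
  simpa only [hrestrict, Measure.restrict_apply_univ] using
    eLpNorm_le_eLpNorm_mul_rpow_measure_univ hst (hG.restrict (s := Metric.closedBall 0 R))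

lemma exists_enorm_integral_mul_ft_le {s t : ℝ≥0∞} (hs₁ : 1 ≤ s) (hs₂ : s ≤ 2) (hst : s ≤ t) :
    ∃ C : ℝ≥0∞, C ≠ ∞ ∧ ∀ (G H f : En n → ℂ) (l R : ℝ), Integrable G → Continuous H →
      Function.support H ⊆ Metric.closedBall 0 R →
      (∀ z, ft H z = helmholtzSymbol l z * ft G z) → Integrable f →
      ‖∫ ξ, G ξ * ft f ξ‖ₑ ≤
        C * (eLpNorm H t volume *
          volume (Metric.closedBall (0 : En n) R) ^ (1 / s.toReal - 1 / t.toReal)) *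
            eLpNorm f s (dualMeasure n l) := by
  have hsq : s.HolderConjugate (1 - s⁻¹)⁻¹ := by
    rw [ENNReal.holderConjugate_iff, inv_inv, add_tsub_cancel_of_le (ENNReal.inv_le_one.2 hs₁)]
  obtain ⟨C, hC, hft⟩ := exists_eLpNorm_ft_le (n := n) hsq hs₂
  refine ⟨C, hC, fun G H f l R hG hH hHR hGH hf ↦ ?_⟩
  have hHc : HasCompactSupport H := .of_support_subset_isCompact (isCompact_closedBall 0 R) hHR
  have hH_int : Integrable H := hH.integrable_of_hasCompactSupport hHc
  have hνv : dualMeasure n l ≤ volume := dualMeasure_le_volume l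
  have hft_meas : AEMeasurable fun z ↦ ‖ft G z‖ₑ * ‖f z‖ₑ :=
    (continuous_ft hG).enorm.aemeasurable.mul hf.1.enorm
  calc
    ‖∫ ξ, G ξ * ft f ξ‖ₑ = ‖∫ z, ft G z * f z‖ₑ := by rw [integral_mul_ft_eq hG hf]
    _ ≤ ∫⁻ z, ‖ft G z‖ₑ * ‖f z‖ₑ := by
      simpa only [enorm_mul] using enorm_integral_le_lintegral_enorm fun z ↦ ft G z * f z
    _ = ∫⁻ z, ‖ft H z‖ₑ * ‖f z‖ₑ ∂dualMeasure n l := by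
      rw [← lintegral_dualMeasure l hft_meas]
      refine lintegral_congr fun z ↦ ?_
      rw [hGH, enorm_mul, ← ofReal_norm (helmholtzSymbol l z : ℂ), Complex.norm_real,
        Real.norm_of_nonneg (helmholtzSymbol_pos l z).le, mul_assoc]
    _ ≤ eLpNorm (ft H) (1 - s⁻¹)⁻¹ (dualMeasure n l) * eLpNorm f s (dualMeasure n l) := by
      have := hsq.symm
      simpa only [eLpNorm_one_eq_lintegral_enorm, enorm_eq_self, eLpNorm_enorm] using
        eLpNorm_mul_le_mul_eLpNorm (1 - s⁻¹)⁻¹ s 1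
          (continuous_ft hH_int).enorm.aemeasurable (hf.1.enorm.mono_measure hνv)
    _ ≤ C * eLpNorm H s volume * eLpNorm f s (dualMeasure n l) := by
      gcongr
      exact (eLpNorm_mono_measure _ hνv).trans
        (hft H hH_int (hH.memLp_of_hasCompactSupport hHc))
    _ ≤ _ := by
      gcongr
      exact eLpNorm_le_mul_of_support_subset_closedBall hst hH.aestronglyMeasurable hHR

end DualMeasure

section PartialIntegral

variable {n : ℕ} {F : En n × En n → ℂ} {h : En n → ℂ} {R : ℝ}

/-- The partial integral `ξ ↦ ∫ F(ξ, η) h(η) dη`. -/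
def partialIntegral (F : En n × En n → ℂ) (h : En n → ℂ) (ξ : En n) : ℂ := ∫ η, F (ξ, η) * h η

lemma support_section_right_subset (hF : Function.support F ⊆ Metric.closedBall 0 R) (ξ : En n) :
    Function.support (fun η ↦ F (ξ, η)) ⊆ Metric.closedBall 0 R := fun η hη ↦ by
  have := hF (show (ξ, η) ∈ Function.support F from hη)
  rw [mem_closedBall_zero_iff] at this ⊢
  exact (norm_snd_le (ξ, η)).trans this

lemma support_partialIntegral_subset (hF : Function.support F ⊆ Metric.closedBall 0 R) :
    Function.support (partialIntegral F h) ⊆ Metric.closedBall 0 R := by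
  refine Function.support_subset_iff'.2 fun ξ hξ ↦ ?_
  refine integral_eq_zero_of_ae (.of_forall fun η ↦ ?_)
  have hFξ : F (ξ, η) = 0 := Function.notMem_support.1 fun hη ↦ hξ <| by
    rw [mem_closedBall_zero_iff]
    exact (norm_fst_le (ξ, η)).trans (mem_closedBall_zero_iff.1 (hF hη))
  simp [hFξ]

lemma continuous_partialIntegral (hF : Continuous F)
    (hFR : Function.support F ⊆ Metric.closedBall 0 R) (hh : Continuous h) :
    Continuous (partialIntegral F h) := by
  have hset (ξ : En n) :
      partialIntegral F h ξ = ∫ η in Metric.closedBall 0 R, F (ξ, η) * h η :=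
    (setIntegral_eq_integral_of_forall_compl_eq_zero fun η hη ↦ by
      rw [Function.support_subset_iff'.1 (support_section_right_subset hFR ξ) η hη,
        zero_mul]).symm
  simp only [funext hset]
  exact continuous_parametric_integral_of_continuous (by fun_prop) (isCompact_closedBall 0 R)

lemma integrable_mul_of_support_subset_closedBall (hF : Continuous F)
    (hFR : Function.support F ⊆ Metric.closedBall 0 R) {u : En n × En n → ℂ} (hu : Continuous u) :
    Integrable (fun w ↦ F w * u w) :=
  (hF.mul hu).integrable_of_hasCompactSupport
    (HasCompactSupport.of_support_subset_isCompact (isCompact_closedBall 0 R) hFR).mul_right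

lemma integral_mul_mul_eq_integral_partialIntegral (hF : Continuous F)
    (hFR : Function.support F ⊆ Metric.closedBall 0 R) {u : En n → ℂ} (hu : Continuous u)
    (hh : Continuous h) :
    ∫ w, F w * (u w.1 * h w.2) = ∫ ξ, partialIntegral F h ξ * u ξ := by
  have hint := integrable_mul_of_support_subset_closedBall hF hFR
    (u := fun w ↦ u w.1 * h w.2) (by fun_prop)
  rw [Measure.volume_eq_prod, integral_prod _ hint]
  refine integral_congr_ae (.of_forall fun ξ ↦ ?_)
  simp only [partialIntegral, ← integral_mul_const]
  refine integral_congr_ae (.of_forall fun η ↦ ?_)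
  ring

lemma ft_partialIntegral (hF : Continuous F) (hFR : Function.support F ⊆ Metric.closedBall 0 R)
    (hh : Continuous h) (z : En n) :
    ft (partialIntegral F h) z = ∫ η, ft (fun ξ ↦ F (ξ, η)) z * h η := by
  have hint := integrable_mul_of_support_subset_closedBall hF hFR
    (u := fun w ↦ Complex.exp (-(I * ofReal ⟪w.1, z⟫)) * h w.2) (by fun_prop)
  simp only [ft, partialIntegral, ← integral_const_mul, ← integral_mul_const]
  rw [integral_integral_swap]
  · refine integral_congr_ae (.of_forall fun η ↦ integral_congr_ae (.of_forall fun ξ ↦ ?_))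
    ring
  · refine hint.congr (.of_forall fun w ↦ ?_)
    simp only [Function.uncurry]
    ring

lemma ft_partialIntegral_eq_mul {F₀ F₁ : En n × En n → ℂ} (hF₀ : Continuous F₀)
    (hF₁ : Continuous F₁) (hF₀R : Function.support F₀ ⊆ Metric.closedBall 0 R)
    (hF₁R : Function.support F₁ ⊆ Metric.closedBall 0 R) (hh : Continuous h) {z : En n} {c : ℂ}
    (hc : ∀ η, ft (fun ξ ↦ F₁ (ξ, η)) z = c * ft (fun ξ ↦ F₀ (ξ, η)) z) :
    ft (partialIntegral F₁ h) z = c * ft (partialIntegral F₀ h) z := by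
  rw [ft_partialIntegral hF₁ hF₁R hh, ft_partialIntegral hF₀ hF₀R hh, ← integral_const_mul]
  refine integral_congr_ae (.of_forall fun η ↦ ?_)
  simp only [hc, mul_assoc]

end PartialIntegral

section BilinearEstimate

variable {n : ℕ}

lemma eLpNorm_eLpNorm_section {X Y E : Type*} [MeasurableSpace X] [MeasurableSpace Y]
    [NormedAddCommGroup E] {μ : Measure X} {ν : Measure Y} [SFinite ν] {t : ℝ≥0∞}
    (ht : t ≠ ∞) {F : X × Y → E} (hF : AEStronglyMeasurable F (μ.prod ν)) :
    eLpNorm (fun x ↦ eLpNorm (fun y ↦ F (x, y)) t ν) t μ = eLpNorm F t (μ.prod ν) := by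
  obtain rfl | ht₀ := eq_or_ne t 0
  · simp
  have htr := ENNReal.toReal_pos ht₀ ht
  simp only [eLpNorm_eq_lintegral_rpow_enorm_toReal ht₀ ht, enorm_eq_self, one_div,
    ENNReal.rpow_inv_rpow htr.ne']
  rw [lintegral_prod _ (hF.enorm.pow_const _)]

theorem exists_enorm_integral_mul_ft_mul_ft_le {s₁ s₂ t : ℝ≥0∞} (hs₁ : 1 ≤ s₁) (hs₁' : s₁ ≤ 2)
    (hs₁t : s₁ ≤ t) (hs₂ : 1 ≤ s₂) (hs₂' : s₂ ≤ 2) (hs₂t : s₂ ≤ t) (ht : t ≠ ∞) :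
    ∃ C : ℝ≥0∞, C ≠ ∞ ∧ ∀ (F₀ F₁ F₂ : En n × En n → ℂ) (f g : En n → ℂ) (l R : ℝ),
      Continuous F₀ → Continuous F₁ → Continuous F₂ →
      Function.support F₀ ⊆ Metric.closedBall 0 R →
      Function.support F₁ ⊆ Metric.closedBall 0 R →
      Function.support F₂ ⊆ Metric.closedBall 0 R →
      (∀ η z, ft (fun ξ ↦ F₁ (ξ, η)) z = helmholtzSymbol l z * ft (fun ξ ↦ F₀ (ξ, η)) z) →
      (∀ ξ z, ft (fun η ↦ F₂ (ξ, η)) z = helmholtzSymbol l z * ft (fun η ↦ F₁ (ξ, η)) z) →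
      Integrable f → Integrable g →
      ‖∫ w, F₀ w * (ft f w.1 * ft g w.2)‖ₑ ≤
        C * (volume (Metric.closedBall (0 : En n) R) ^ (1 / s₁.toReal - 1 / t.toReal) *
          volume (Metric.closedBall (0 : En n) R) ^ (1 / s₂.toReal - 1 / t.toReal) *
            eLpNorm F₂ t volume) *
          (eLpNorm f s₁ (dualMeasure n l) * eLpNorm g s₂ (dualMeasure n l)) := by
  obtain ⟨C₁, hC₁, h₁⟩ := exists_enorm_integral_mul_ft_le (n := n) hs₁ hs₁' hs₁t
  obtain ⟨C₂, hC₂, h₂⟩ := exists_enorm_integral_mul_ft_le (n := n) hs₂ hs₂' hs₂t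
  refine ⟨C₁ * C₂, ENNReal.mul_ne_top hC₁ hC₂, ?_⟩
  intro F₀ F₁ F₂ f g l R hF₀ hF₁ hF₂ hF₀R hF₁R hF₂R hft₁ hft₂ hf hg
  have integrable_of_support {H : En n → ℂ} (hH : Continuous H)
      (hHR : Function.support H ⊆ Metric.closedBall 0 R) : Integrable H :=
    hH.integrable_of_hasCompactSupport (.of_support_subset_isCompact (isCompact_closedBall 0 R) hHR)
  have hg' := continuous_ft hg
  have hsection (ξ : En n) := h₂ (fun η ↦ F₁ (ξ, η)) (fun η ↦ F₂ (ξ, η)) g l R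
    (integrable_of_support (by fun_prop) (support_section_right_subset hF₁R ξ)) (by fun_prop)
    (support_section_right_subset hF₂R ξ) (hft₂ ξ) hg
  have hF₁_le : eLpNorm (partialIntegral F₁ (ft g)) t volume ≤
      C₂ * volume (Metric.closedBall (0 : En n) R) ^ (1 / s₂.toReal - 1 / t.toReal) *
        eLpNorm g s₂ (dualMeasure n l) * eLpNorm F₂ t volume := by
    have hF₂_meas := hF₂.aestronglyMeasurable (μ := (volume : Measure (En n)).prod volume)
    rw [Measure.volume_eq_prod, ← eLpNorm_eLpNorm_section ht hF₂_meas]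
    refine le_trans (eLpNorm_mono_enorm fun ξ ↦ ?_) (eLpNorm_const_mul_le_of_aemeasurable _
      (aemeasurable_eLpNorm_section (B := fun ξ η ↦ F₂ (ξ, η)) ht hF₂_meas) t)
    simpa only [enorm_eq_self, partialIntegral, ← mul_assoc, mul_right_comm] using hsection ξ
  rw [integral_mul_mul_eq_integral_partialIntegral hF₀ hF₀R (continuous_ft hf) hg']
  refine (h₁ _ _ f l R (integrable_of_support (continuous_partialIntegral hF₀ hF₀R hg')
    (support_partialIntegral_subset hF₀R)) (continuous_partialIntegral hF₁ hF₁R hg')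
    (support_partialIntegral_subset hF₁R)
    (fun z ↦ ft_partialIntegral_eq_mul hF₀ hF₁ hF₀R hF₁R hg' fun η ↦ hft₁ η z) hf).trans ?_
  grw [hF₁_le]
  exact le_of_eq (by ring)

end BilinearEstimate

section DirDeriv

variable {E E' F : Type*} [NormedAddCommGroup E] [NormedSpace ℝ E] [NormedAddCommGroup E']
  [NormedSpace ℝ E'] [NormedAddCommGroup F] [NormedSpace ℝ F]

/-- The derivative `∂_v G`. -/
def dirDeriv (v : E) (G : E → F) : E → F := fun x ↦ fderiv ℝ G x v

/-- The iterated derivative `∂_{v₁} ⋯ ∂_{v_j} G` along the list of directions `[v₁, …, v_j]`. -/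
def iterDirDeriv (L : List E) (G : E → F) : E → F := L.foldr dirDeriv G

lemma iterDirDeriv_cons (v : E) (L : List E) (G : E → F) :
    iterDirDeriv (v :: L) G = dirDeriv v (iterDirDeriv L G) := rfl

lemma iterDirDeriv_append (L L' : List E) (G : E → F) :
    iterDirDeriv (L ++ L') G = iterDirDeriv L (iterDirDeriv L' G) :=
  List.foldr_append

lemma iterDirDeriv_replicate (k : ℕ) (v : E) (G : E → F) :
    iterDirDeriv (List.replicate k v) G = (dirDeriv v)^[k] G := by
  induction k with
  | zero => rfl
  | succ k ih =>
    rw [List.replicate_succ, iterDirDeriv_cons, ih, Function.iterate_succ_apply']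

lemma iterDirDeriv_flatMap {ι : Type*} (I : List ι) (L : ι → List E) (G : E → F) :
    iterDirDeriv (I.flatMap L) G = I.foldr (fun i ↦ iterDirDeriv (L i)) G := by
  induction I with
  | nil => rfl
  | cons i I ih => rw [List.flatMap_cons, iterDirDeriv_append, ih, List.foldr_cons]

lemma contDiff_dirDeriv {G : E → F} (hG : ContDiff ℝ (⊤ : ℕ∞) G) (v : E) :
    ContDiff ℝ (⊤ : ℕ∞) (dirDeriv v G) :=
  (hG.fderiv_right (m := (⊤ : ℕ∞)) (by simp)).clm_apply contDiff_const

lemma contDiff_iterDirDeriv {G : E → F} (hG : ContDiff ℝ (⊤ : ℕ∞) G) (L : List E) :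
    ContDiff ℝ (⊤ : ℕ∞) (iterDirDeriv L G) := by
  induction L with
  | nil => exact hG
  | cons v L ih => exact contDiff_dirDeriv ih v

lemma tsupport_dirDeriv_subset (v : E) (G : E → F) : tsupport (dirDeriv v G) ⊆ tsupport G :=
  tsupport_fderiv_apply_subset ℝ v

lemma dirDeriv_comp_affine {G : E → F} (hG : Differentiable ℝ G) (A : E' →L[ℝ] E) (c : E)
    (v : E') :
    dirDeriv v (fun x ↦ G (A x + c)) = fun x ↦ dirDeriv (A v) G (A x + c) := by
  ext x
  have hA : HasFDerivAt (fun x ↦ A x + c) A x := A.hasFDerivAt.add_const c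
  have hcomp := ((hG (A x + c)).hasFDerivAt.comp x hA).fderiv
  simp only [dirDeriv, Function.comp_def] at hcomp ⊢
  rw [hcomp, ContinuousLinearMap.comp_apply]

lemma iterDirDeriv_comp_affine {G : E → F} (hG : ContDiff ℝ (⊤ : ℕ∞) G) (A : E' →L[ℝ] E) (c : E)
    (L : List E') :
    iterDirDeriv L (fun x ↦ G (A x + c)) = fun x ↦ iterDirDeriv (L.map A) G (A x + c) := by
  induction L with
  | nil => rfl
  | cons v L ih =>
    rw [iterDirDeriv_cons, ih, List.map_cons, iterDirDeriv_cons]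
    exact dirDeriv_comp_affine ((contDiff_iterDirDeriv hG _).differentiable (by simp)) A c v

lemma dirDeriv_comm {G : E → F} (hG : ContDiff ℝ (⊤ : ℕ∞) G) (v w : E) :
    dirDeriv v (dirDeriv w G) = dirDeriv w (dirDeriv v G) := by
  ext x
  have hG' : Differentiable ℝ (fderiv ℝ G) :=
    (hG.fderiv_right (m := (⊤ : ℕ∞)) (by simp)).differentiable (by simp)
  have happly (u u' : E) : dirDeriv u (dirDeriv u' G) x = fderiv ℝ (fderiv ℝ G) x u u' := by
    change fderiv ℝ (fun y ↦ fderiv ℝ G y u') x u = _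
    rw [fderiv_clm_apply (hG' x) (differentiableAt_const u')]
    simp
  rw [happly, happly]
  exact second_derivative_symmetric
    (fun y ↦ ((hG.differentiable (by simp)) y).hasFDerivAt) (hG' x).hasFDerivAt v w

lemma iterDirDeriv_perm {G : E → F} (hG : ContDiff ℝ (⊤ : ℕ∞) G) {L L' : List E}
    (h : L.Perm L') : iterDirDeriv L G = iterDirDeriv L' G := by
  induction h with
  | nil => rfl
  | cons v _ ih => rw [iterDirDeriv_cons, iterDirDeriv_cons, ih]
  | swap v w L => exact dirDeriv_comm (contDiff_iterDirDeriv hG L) w v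
  | trans _ _ ih ih' => exact ih.trans ih'

lemma iteratedFDeriv_apply_eq_iterDirDeriv {G : E → F} (hG : ContDiff ℝ (⊤ : ℕ∞) G) {j : ℕ}
    (v : Fin j → E) (x : E) :
    iteratedFDeriv ℝ j G x v = iterDirDeriv (List.ofFn v) G x := by
  induction j generalizing x with
  | zero => simp [iterDirDeriv]
  | succ j ih =>
    have htail : (fun y ↦ iteratedFDeriv ℝ j G y (Fin.tail v)) =
        iterDirDeriv (List.ofFn (Fin.tail v)) G := funext fun y ↦ ih (Fin.tail v) y
    rw [(hG.differentiable_iteratedFDeriv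
      (by exact_mod_cast ENat.natCast_lt_top j) x).iteratedFDeriv_succ_apply_left', htail,
      List.ofFn_succ, iterDirDeriv_cons]
    rfl

end DirDeriv

section JetNorm

variable {E F : Type*} [NormedAddCommGroup E] [NormedSpace ℝ E] [NormedAddCommGroup F]
  [NormedSpace ℝ F]

/-- The operator `1 - l² ∂_v²`. -/
def helmholtz (l : ℝ) (v : E) (G : E → F) : E → F :=
  fun x ↦ G x - l ^ 2 • dirDeriv v (dirDeriv v G) x

/-- The composition of the operators `1 - l² ∂_v²` over the directions `v` in `L`. -/
def helmholtzList (l : ℝ) (L : List E) (G : E → F) : E → F := L.foldr (helmholtz l) G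

lemma helmholtzList_cons (l : ℝ) (v : E) (L : List E) (G : E → F) :
    helmholtzList l (v :: L) G = helmholtz l v (helmholtzList l L G) := rfl

lemma helmholtzList_append (l : ℝ) (L L' : List E) (G : E → F) :
    helmholtzList l (L ++ L') G = helmholtzList l L (helmholtzList l L' G) :=
  List.foldr_append

lemma contDiff_helmholtz {G : E → F} (hG : ContDiff ℝ (⊤ : ℕ∞) G) (l : ℝ) (v : E) :
    ContDiff ℝ (⊤ : ℕ∞) (helmholtz l v G) :=
  hG.sub ((contDiff_dirDeriv (contDiff_dirDeriv hG v) v).const_smul (l ^ 2))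

lemma contDiff_helmholtzList {G : E → F} (hG : ContDiff ℝ (⊤ : ℕ∞) G) (l : ℝ) (L : List E) :
    ContDiff ℝ (⊤ : ℕ∞) (helmholtzList l L G) := by
  induction L with
  | nil => exact hG
  | cons v L ih => exact contDiff_helmholtz ih l v

lemma tsupport_helmholtz_subset (l : ℝ) (v : E) (G : E → F) :
    tsupport (helmholtz l v G) ⊆ tsupport G := by
  refine closure_minimal (fun x hx ↦ ?_) (isClosed_tsupport G)
  by_contra h
  have h' : x ∉ tsupport (dirDeriv v (dirDeriv v G)) := fun hx' ↦
    h (tsupport_dirDeriv_subset v G (tsupport_dirDeriv_subset v _ hx'))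
  exact hx (by simp only [helmholtz, image_eq_zero_of_notMem_tsupport h,
    image_eq_zero_of_notMem_tsupport h', smul_zero, sub_zero])

lemma tsupport_helmholtzList_subset (l : ℝ) (L : List E) (G : E → F) :
    tsupport (helmholtzList l L G) ⊆ tsupport G := by
  induction L with
  | nil => exact subset_rfl
  | cons v L ih => exact (tsupport_helmholtz_subset l v _).trans ih

lemma helmholtzList_comp_affine {E' : Type*} [NormedAddCommGroup E'] [NormedSpace ℝ E']
    {G : E → F} (hG : ContDiff ℝ (⊤ : ℕ∞) G) (A : E' →L[ℝ] E) (c : E) (l : ℝ) (L : List E') :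
    helmholtzList l L (fun x ↦ G (A x + c)) = fun x ↦ helmholtzList l (L.map A) G (A x + c) := by
  induction L with
  | nil => rfl
  | cons v L ih =>
    have hH := contDiff_helmholtzList hG l (L.map A)
    rw [helmholtzList_cons, ih, List.map_cons, helmholtzList_cons]
    ext x
    simp only [helmholtz, dirDeriv_comp_affine (hH.differentiable (by simp)) A c v,
      dirDeriv_comp_affine ((contDiff_dirDeriv hH (A v)).differentiable (by simp)) A c v]

/-- The size `∑_{j ≤ N} l^j ‖D^j G (x)‖` of the `N`-jet of `G` at `x`, measured at length
scale `l`. -/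
def jetNorm (l : ℝ) (N : ℕ) (G : E → F) (x : E) : ℝ :=
  ∑ j ∈ Finset.range (N + 1), l ^ j * ‖iteratedFDeriv ℝ j G x‖

lemma jetNorm_nonneg {l : ℝ} (hl : 0 ≤ l) (N : ℕ) (G : E → F) (x : E) : 0 ≤ jetNorm l N G x :=
  Finset.sum_nonneg fun _ _ ↦ by positivity

lemma jetNorm_zero (l : ℝ) (G : E → F) (x : E) : jetNorm l 0 G x = ‖G x‖ := by
  simp [jetNorm]

lemma norm_iteratedFDeriv_dirDeriv_le {G : E → F} (hG : ContDiff ℝ (⊤ : ℕ∞) G) {v : E}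
    (hv : ‖v‖ ≤ 1) (j : ℕ) (x : E) :
    ‖iteratedFDeriv ℝ j (dirDeriv v G) x‖ ≤ ‖iteratedFDeriv ℝ (j + 1) G x‖ := by
  rw [← norm_iteratedFDeriv_fderiv]
  exact (norm_iteratedFDeriv_clm_apply_const (N := (⊤ : ℕ∞))
    (hG.fderiv_right (m := (⊤ : ℕ∞)) (by simp)).contDiffAt (by exact_mod_cast le_top)).trans
    (mul_le_of_le_one_left (norm_nonneg _) hv)

lemma jetNorm_helmholtz_le {G : E → F} (hG : ContDiff ℝ (⊤ : ℕ∞) G) {l : ℝ} (hl : 0 ≤ l) {v : E}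
    (hv : ‖v‖ ≤ 1) (N : ℕ) (x : E) :
    jetNorm l N (helmholtz l v G) x ≤ 2 * jetNorm l (N + 2) G x := by
  have hterm (j : ℕ) : l ^ j * ‖iteratedFDeriv ℝ j (helmholtz l v G) x‖ ≤
      l ^ j * ‖iteratedFDeriv ℝ j G x‖ + l ^ (j + 2) * ‖iteratedFDeriv ℝ (j + 2) G x‖ := by
    have hG'' := contDiff_dirDeriv (contDiff_dirDeriv hG v) v
    have hj : (j : WithTop ℕ∞) ≤ (⊤ : ℕ∞) := by exact_mod_cast le_top
    have hsecond : ‖iteratedFDeriv ℝ j (dirDeriv v (dirDeriv v G)) x‖ ≤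
        ‖iteratedFDeriv ℝ (j + 2) G x‖ :=
      (norm_iteratedFDeriv_dirDeriv_le (contDiff_dirDeriv hG v) hv j x).trans
        (norm_iteratedFDeriv_dirDeriv_le hG hv (j + 1) x)
    have hsub : iteratedFDeriv ℝ j (helmholtz l v G) x = iteratedFDeriv ℝ j G x -
        l ^ 2 • iteratedFDeriv ℝ j (dirDeriv v (dirDeriv v G)) x := by
      rw [← iteratedFDeriv_const_smul_apply' (hG''.of_le hj).contDiffAt]
      exact fun_iteratedFDeriv_sub_apply (hG.of_le hj).contDiffAt
        ((hG''.const_smul (l ^ 2)).of_le hj).contDiffAt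
    rw [hsub]
    grw [norm_sub_le, norm_smul, hsecond, Real.norm_of_nonneg (sq_nonneg l)]
    exact le_of_eq (by ring)
  have hlow : jetNorm l N G x ≤ jetNorm l (N + 2) G x :=
    Finset.sum_le_sum_of_subset_of_nonneg (Finset.range_mono (by omega))
      fun _ _ _ ↦ by positivity
  have hhigh : ∑ j ∈ Finset.range (N + 1), l ^ (j + 2) * ‖iteratedFDeriv ℝ (j + 2) G x‖ ≤
      jetNorm l (N + 2) G x := by
    rw [jetNorm, Finset.sum_range_succ' _ (N + 2), Finset.sum_range_succ' _ (N + 1), add_assoc]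
    exact le_add_of_nonneg_right (by positivity)
  calc
    jetNorm l N (helmholtz l v G) x ≤ jetNorm l N G x +
        ∑ j ∈ Finset.range (N + 1), l ^ (j + 2) * ‖iteratedFDeriv ℝ (j + 2) G x‖ := by
      rw [jetNorm, jetNorm, ← Finset.sum_add_distrib]
      exact Finset.sum_le_sum fun j _ ↦ hterm j
    _ ≤ 2 * jetNorm l (N + 2) G x := by linarith

lemma jetNorm_helmholtzList_le {G : E → F} (hG : ContDiff ℝ (⊤ : ℕ∞) G) {l : ℝ} (hl : 0 ≤ l)
    {L : List E} (hL : ∀ v ∈ L, ‖v‖ ≤ 1) (N : ℕ) (x : E) :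
    jetNorm l N (helmholtzList l L G) x ≤ 2 ^ L.length * jetNorm l (N + 2 * L.length) G x := by
  induction L generalizing N with
  | nil => simp [helmholtzList]
  | cons v L ih =>
    rw [List.forall_mem_cons] at hL
    calc
      _ ≤ 2 * jetNorm l (N + 2) (helmholtzList l L G) x :=
        jetNorm_helmholtz_le (contDiff_helmholtzList hG l L) hl hL.1 N x
      _ ≤ 2 * (2 ^ L.length * jetNorm l (N + 2 + 2 * L.length) G x) := by
        gcongr
        exact ih hL.2 (N + 2)
      _ = _ := by
        rw [List.length_cons, show N + 2 + 2 * L.length = N + 2 * (L.length + 1) by ring]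
        ring

lemma jetNorm_mul_le {A : Type*} [NormedRing A] [NormedAlgebra ℝ A] {G H : E → A}
    (hG : ContDiff ℝ (⊤ : ℕ∞) G) (hH : ContDiff ℝ (⊤ : ℕ∞) H) {l : ℝ} (hl : 0 ≤ l) (N : ℕ)
    (x : E) :
    jetNorm l N (fun y ↦ G y * H y) x ≤ 2 ^ N * (jetNorm l N G x * jetNorm l N H x) := by
  have hterm (j : ℕ) (hj : j ∈ Finset.range (N + 1)) :
      l ^ j * ‖iteratedFDeriv ℝ j (fun y ↦ G y * H y) x‖ ≤
        2 ^ N * ∑ i ∈ Finset.range (j + 1), (l ^ i * ‖iteratedFDeriv ℝ i G x‖) *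
          (l ^ (j - i) * ‖iteratedFDeriv ℝ (j - i) H x‖) := by
    grw [norm_iteratedFDeriv_mul_le hG hH x (by exact_mod_cast le_top), Finset.mul_sum,
      Finset.mul_sum]
    refine Finset.sum_le_sum fun i hi ↦ ?_
    have hchoose : (j.choose i : ℝ) ≤ 2 ^ N := by
      have := Nat.choose_le_two_pow j i
      have := Nat.pow_le_pow_right two_pos (Finset.mem_range_succ_iff.1 hj)
      exact_mod_cast (by omega)
    have hpow : l ^ j = l ^ i * l ^ (j - i) := by
      rw [← pow_add, Nat.add_sub_cancel' (Finset.mem_range_succ_iff.1 hi)]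
    grw [hchoose, hpow]
    exact le_of_eq (by ring)
  rw [jetNorm, jetNorm, jetNorm]
  grw [Finset.sum_le_sum hterm, ← Finset.mul_sum]
  rw [Finset.sum_range_diag_flip (N + 1) fun i k ↦ (l ^ i * ‖iteratedFDeriv ℝ i G x‖) *
    (l ^ k * ‖iteratedFDeriv ℝ k H x‖), Finset.sum_mul_sum]
  gcongr with i
  omega

end JetNorm

section CoordinateDerivatives

variable {E F : Type*} [NormedAddCommGroup E] [NormedSpace ℝ E]
  [NormedAddCommGroup F] [NormedSpace ℝ F] {ι : Type*} [Fintype ι] {n : ℕ}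

lemma exists_norm_continuousMultilinearMap_le (b : Module.Basis ι ℝ E) (j : ℕ) :
    ∃ C : ℝ, 0 ≤ C ∧ ∀ f : E [×j]→L[ℝ] F, ‖f‖ ≤ C * ∑ w : Fin j → ι, ‖f (b ∘ w)‖ := by
  classical
  set K := ‖(b.equivFunL : E →L[ℝ] ι → ℝ)‖
  have hcoord (v : E) (i : ι) : ‖b.repr v i‖ ≤ K * ‖v‖ :=
    (norm_le_pi_norm (b.equivFunL v) i).trans ((b.equivFunL : E →L[ℝ] ι → ℝ).le_opNorm v)
  refine ⟨K ^ j, by positivity, fun f ↦ f.opNorm_le_bound (by positivity) fun v ↦ ?_⟩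
  have hexpand : f v = ∑ w : Fin j → ι, (∏ k, b.repr (v k) (w k)) • f (b ∘ w) := by
    conv_lhs => rw [show v = fun k ↦ ∑ i, b.repr (v k) i • b i from
      funext fun k ↦ (b.sum_repr (v k)).symm, f.map_sum]
    exact Finset.sum_congr rfl fun w _ ↦ f.map_smul_univ _ _
  rw [hexpand, Finset.mul_sum, Finset.sum_mul]
  refine norm_sum_le_of_le _ fun w _ ↦ ?_
  calc
    ‖(∏ k, b.repr (v k) (w k)) • f (b ∘ w)‖ = (∏ k, ‖b.repr (v k) (w k)‖) * ‖f (b ∘ w)‖ := by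
      rw [norm_smul, norm_prod]
    _ ≤ (∏ k, K * ‖v k‖) * ‖f (b ∘ w)‖ := by
      gcongr with k
      exact hcoord (v k) (w k)
    _ = K ^ j * ‖f (b ∘ w)‖ * ∏ k, ‖v k‖ := by
      rw [Finset.prod_mul_distrib, Finset.prod_const, Finset.card_univ, Fintype.card_fin]
      ring

lemma exists_norm_iteratedFDeriv_le (b : Module.Basis ι ℝ E) (j : ℕ) :
    ∃ C : ℝ, 0 ≤ C ∧ ∀ (G : E → F) (x : E), ContDiff ℝ (⊤ : ℕ∞) G →
      ‖iteratedFDeriv ℝ j G x‖ ≤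
        C * ∑ w : Fin j → ι, ‖iterDirDeriv ((List.ofFn w).map b) G x‖ := by
  obtain ⟨C, hC, h⟩ := exists_norm_continuousMultilinearMap_le (F := F) b j
  refine ⟨C, hC, fun G x hG ↦ (h _).trans_eq ?_⟩
  simp only [iteratedFDeriv_apply_eq_iterDirDeriv hG, List.map_ofFn]

/-- The coordinate basis of the space of pairs of frequencies `(ξ, η)`. -/
def freqBasis (n : ℕ) : Module.Basis (Fin n ⊕ Fin n) ℝ (En n × En n) :=
  (EuclideanSpace.basisFun (Fin n) ℝ).toBasis.prod (EuclideanSpace.basisFun (Fin n) ℝ).toBasis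

lemma freqBasis_inl (i : Fin n) : freqBasis n (.inl i) = (EuclideanSpace.single i 1, 0) := by
  simp [freqBasis]

lemma freqBasis_inr (i : Fin n) : freqBasis n (.inr i) = (0, EuclideanSpace.single i 1) := by
  simp [freqBasis]

/-- The list of coordinate directions in which each index `i` is repeated `α i` times. -/
def multiIndexDirs (α : Fin n → ℕ) : List (En n) :=
  (List.finRange n).flatMap fun i ↦ List.replicate (α i) (EuclideanSpace.single i 1)

lemma mderiv_eq_iterDirDeriv {F : Type} [NormedAddCommGroup F] [NormedSpace ℝ F] (α : Fin n → ℕ)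
    (G : En n → F) : mderiv α G = iterDirDeriv (multiIndexDirs α) G := by
  have hfold : (fun i g ↦ (pd i)^[α i] g) = fun i ↦
      iterDirDeriv (F := F) (List.replicate (α i) (EuclideanSpace.single i (1 : ℝ))) :=
    funext₂ fun i g ↦ (iterDirDeriv_replicate (α i) _ g).symm
  rw [mderiv, hfold, multiIndexDirs, iterDirDeriv_flatMap]

lemma d2_eq_iterDirDeriv {a : En n → En n → En n → ℂ} {x : En n}
    (ha : ContDiff ℝ (⊤ : ℕ∞) fun q : En n × En n ↦ a x q.1 q.2) (α β : Fin n → ℕ)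
    (w : En n × En n) :
    d2 α β a x w.1 w.2 =
      iterDirDeriv ((multiIndexDirs α).map (ContinuousLinearMap.inl ℝ (En n) (En n)) ++
        (multiIndexDirs β).map (ContinuousLinearMap.inr ℝ (En n) (En n)))
        (fun q : En n × En n ↦ a x q.1 q.2) w := by
  have hinner (ζ : En n) : mderiv β (fun θ ↦ a x ζ θ) w.2 =
      iterDirDeriv ((multiIndexDirs β).map (ContinuousLinearMap.inr ℝ (En n) (En n)))
        (fun q : En n × En n ↦ a x q.1 q.2)
        (ContinuousLinearMap.inl ℝ (En n) (En n) ζ + (0, w.2)) := by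
    have := congrFun (iterDirDeriv_comp_affine ha (ContinuousLinearMap.inr ℝ (En n) (En n)) (ζ, 0)
      (multiIndexDirs β)) w.2
    simpa [mderiv_eq_iterDirDeriv] using this
  simp only [d2, hinner]
  rw [mderiv_eq_iterDirDeriv, iterDirDeriv_comp_affine (contDiff_iterDirDeriv ha _),
    iterDirDeriv_append]
  simp

instance lawfulBEqSum {α β : Type*} [BEq α] [LawfulBEq α] [BEq β] [LawfulBEq β] :
    LawfulBEq (α ⊕ β) where
  rfl {s} := by rcases s with a | b; exacts [beq_self_eq_true a, beq_self_eq_true b]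
  eq_of_beq {s t} h := by
    rcases s with a | b <;> rcases t with a' | b' <;>
      first | cases h | exact congrArg _ (eq_of_beq h)

lemma perm_append_flatMap_replicate_count (L : List (Fin n ⊕ Fin n)) :
    L.Perm (((List.finRange n).flatMap fun i ↦ List.replicate (L.count (.inl i)) (.inl i)) ++
      (List.finRange n).flatMap fun i ↦ List.replicate (L.count (.inr i)) (.inr i)) := by
  rw [List.perm_iff_count]
  rintro (i | i) <;>
    simp [List.count_flatMap, Function.comp_def, List.count_replicate, ← Fin.sum_univ_def]

lemma iterDirDeriv_freqBasis_eq_d2 {a : En n → En n → En n → ℂ} {x : En n}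
    (ha : ContDiff ℝ (⊤ : ℕ∞) fun q : En n × En n ↦ a x q.1 q.2) (L : List (Fin n ⊕ Fin n))
    (w : En n × En n) :
    iterDirDeriv (L.map (freqBasis n)) (fun q : En n × En n ↦ a x q.1 q.2) w =
      d2 (fun i ↦ L.count (.inl i)) (fun i ↦ L.count (.inr i)) a x w.1 w.2 := by
  rw [d2_eq_iterDirDeriv ha, iterDirDeriv_perm ha ((perm_append_flatMap_replicate_count L).map _)]
  simp [multiIndexDirs, List.map_flatMap, freqBasis_inl, freqBasis_inr]

lemma mdeg_count_add_mdeg_count (L : List (Fin n ⊕ Fin n)) :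
    mdeg (fun i ↦ L.count (.inl i)) + mdeg (fun i ↦ L.count (.inr i)) = L.length := by
  have := (perm_append_flatMap_replicate_count L).length_eq
  simpa [List.length_flatMap, ← Fin.sum_univ_def, mdeg] using this.symm

end CoordinateDerivatives

section Helmholtz

variable {n : ℕ}

lemma ft_add_smul {f g : En n → ℂ} (hf : Integrable f) (hg : Integrable g) (c : ℂ) :
    ft (f + c • g) = ft f + c • ft g := by
  simp only [ft_eq_fourierIntegral]
  rw [VectorFourier.fourierIntegral_add Real.continuous_fourierChar (scaledInner n).continuous₂ hf
    (hg.smul c), VectorFourier.fourierIntegral_const_smul]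

lemma ft_helmholtz {G : En n → ℂ} (hG : ContDiff ℝ (⊤ : ℕ∞) G) (hc : HasCompactSupport G)
    (l : ℝ) (v z : En n) :
    ft (helmholtz l v G) z = ((1 + l ^ 2 * ⟪v, z⟫ ^ 2 : ℝ) : ℂ) * ft G z := by
  have hint {H : En n → ℂ} (hH : ContDiff ℝ (⊤ : ℕ∞) H) (hHc : HasCompactSupport H) :
      Integrable H := hH.continuous.integrable_of_hasCompactSupport hHc
  have hderiv {H : En n → ℂ} (hH : ContDiff ℝ (⊤ : ℕ∞) H) (hHc : HasCompactSupport H) :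
      ft (dirDeriv v H) z = I * ofReal ⟪v, z⟫ * ft H z :=
    ft_fderiv_apply (hint hH hHc) (hH.differentiable (by simp))
      ((hH.continuous_fderiv (by simp)).integrable_of_hasCompactSupport (hHc.fderiv (𝕜 := ℝ))) v z
  have hG' := contDiff_dirDeriv hG v
  have hc' : HasCompactSupport (dirDeriv v G) :=
    hc.of_isClosed_subset (isClosed_tsupport _) (tsupport_dirDeriv_subset v G)
  have hG'' := contDiff_dirDeriv hG' v
  have hc'' : HasCompactSupport (dirDeriv v (dirDeriv v G)) :=
    hc'.of_isClosed_subset (isClosed_tsupport _) (tsupport_dirDeriv_subset v _)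
  have hdecomp : helmholtz l v G = G + (-(l : ℂ) ^ 2) • dirDeriv v (dirDeriv v G) := by
    ext x
    simp [helmholtz, sub_eq_add_neg]
  rw [hdecomp, ft_add_smul (hint hG hc) (hint hG'' hc''), Pi.add_apply, Pi.smul_apply,
    hderiv hG' hc', hderiv hG hc, smul_eq_mul]
  push_cast
  linear_combination (-(l : ℂ) ^ 2 * (⟪v, z⟫ : ℂ) ^ 2 * ft G z) * I_sq

lemma ft_helmholtzList {G : En n → ℂ} (hG : ContDiff ℝ (⊤ : ℕ∞) G) (hc : HasCompactSupport G)
    (l : ℝ) (L : List (En n)) (z : En n) :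
    ft (helmholtzList l L G) z =
      (((L.map fun v ↦ 1 + l ^ 2 * ⟪v, z⟫ ^ 2).prod : ℝ) : ℂ) * ft G z := by
  induction L with
  | nil => simp [helmholtzList]
  | cons v L ih =>
    rw [helmholtzList_cons, ft_helmholtz (contDiff_helmholtzList hG l L)
      (hc.of_isClosed_subset (isClosed_tsupport _) (tsupport_helmholtzList_subset l L G)), ih,
      List.map_cons, List.prod_cons]
    push_cast
    ring

/-- The list of coordinate directions of `En n`. -/
def coordDirs (n : ℕ) : List (En n) := List.ofFn fun i ↦ EuclideanSpace.single i 1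

lemma norm_le_one_of_mem_coordDirs {v : En n} (hv : v ∈ coordDirs n) : ‖v‖ ≤ 1 := by
  obtain ⟨i, rfl⟩ := (List.mem_ofFn' _ _).1 hv
  simp

lemma ft_helmholtzList_coordDirs {G : En n → ℂ} (hG : ContDiff ℝ (⊤ : ℕ∞) G)
    (hc : HasCompactSupport G) (l : ℝ) (z : En n) :
    ft (helmholtzList l (coordDirs n) G) z = helmholtzSymbol l z * ft G z := by
  rw [ft_helmholtzList hG hc, coordDirs, List.map_ofFn, List.prod_ofFn]
  simp [helmholtzSymbol, EuclideanSpace.inner_single_left]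

lemma ft_helmholtzList_comp_affine {E : Type*} [NormedAddCommGroup E] [NormedSpace ℝ E]
    {G : E → ℂ} (hG : ContDiff ℝ (⊤ : ℕ∞) G) (hc : HasCompactSupport G) {A : En n →L[ℝ] E}
    (hA : Function.Injective A) (c : E) (l : ℝ) (z : En n) :
    ft (fun x ↦ helmholtzList l ((coordDirs n).map A) G (A x + c)) z =
      helmholtzSymbol l z * ft (fun x ↦ G (A x + c)) z := by
  have hA' : Topology.IsClosedEmbedding fun x ↦ A x + c :=
    (Homeomorph.addRight c).isClosedEmbedding.comp
      (LinearMap.isClosedEmbedding_of_injective (f := A.toLinearMap) (LinearMap.ker_eq_bot.2 hA))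
  rw [← helmholtzList_comp_affine hG]
  exact ft_helmholtzList_coordDirs (hG.comp (A.contDiff.add contDiff_const))
    (hc.comp_isClosedEmbedding hA') l z

theorem exists_enorm_integral_mul_ft_mul_ft_le_jetNorm {s₁ s₂ t : ℝ≥0∞} (hs₁ : 1 ≤ s₁)
    (hs₁' : s₁ ≤ 2) (hs₁t : s₁ ≤ t) (hs₂ : 1 ≤ s₂) (hs₂' : s₂ ≤ 2) (hs₂t : s₂ ≤ t) (ht : t ≠ ∞) :
    ∃ C : ℝ≥0∞, C ≠ ∞ ∧ ∀ (G : En n × En n → ℂ) (f g : En n → ℂ) (l R : ℝ),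
      ContDiff ℝ (⊤ : ℕ∞) G → tsupport G ⊆ Metric.closedBall 0 R → 0 ≤ l →
      Integrable f → Integrable g →
      ‖∫ w, G w * (ft f w.1 * ft g w.2)‖ₑ ≤
        C * (volume (Metric.closedBall (0 : En n) R) ^ (1 / s₁.toReal - 1 / t.toReal) *
          volume (Metric.closedBall (0 : En n) R) ^ (1 / s₂.toReal - 1 / t.toReal) *
            eLpNorm (jetNorm l (4 * n) G) t volume) *
          (eLpNorm f s₁ (dualMeasure n l) * eLpNorm g s₂ (dualMeasure n l)) := by
  obtain ⟨C, hC, h⟩ :=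
    exists_enorm_integral_mul_ft_mul_ft_le (n := n) hs₁ hs₁' hs₁t hs₂ hs₂' hs₂t ht
  refine ⟨C * ENNReal.ofReal (2 ^ (2 * n)), ENNReal.mul_ne_top hC ENNReal.ofReal_ne_top, ?_⟩
  intro G f g l R hG hGR hl hf hg
  let dirs₁ := (coordDirs n).map (ContinuousLinearMap.inl ℝ (En n) (En n))
  let dirs₂ := (coordDirs n).map (ContinuousLinearMap.inr ℝ (En n) (En n))
  have hc : HasCompactSupport G :=
    (isCompact_closedBall 0 R).of_isClosed_subset (isClosed_tsupport G) hGR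
  have hG₁ := contDiff_helmholtzList hG l dirs₁
  have hts₁ := tsupport_helmholtzList_subset l dirs₁ G
  have hts₂ := (tsupport_helmholtzList_subset l dirs₂ (helmholtzList l dirs₁ G)).trans hts₁
  have hbound : eLpNorm (helmholtzList l dirs₂ (helmholtzList l dirs₁ G)) t volume ≤
      ENNReal.ofReal (2 ^ (2 * n)) * eLpNorm (jetNorm l (4 * n) G) t volume := by
    refine eLpNorm_le_mul_eLpNorm_of_ae_le_mul (.of_forall fun w ↦ ?_) t
    have hlen (A : En n →L[ℝ] En n × En n) : ((coordDirs n).map A).length = n := by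
      simp [coordDirs]
    have hle := jetNorm_helmholtzList_le hG hl (L := dirs₂ ++ dirs₁) ?_ 0 w
    · rwa [helmholtzList_append, jetNorm_zero, List.length_append, hlen, hlen, ← two_mul,
        show 0 + 2 * (2 * n) = 4 * n by ring,
        ← Real.norm_of_nonneg (jetNorm_nonneg hl _ _ w)] at hle
    · rw [List.forall_mem_append]
      refine ⟨fun u hu ↦ ?_, fun u hu ↦ ?_⟩ <;>
      · obtain ⟨v, hv, rfl⟩ := List.mem_map.1 hu
        simpa using norm_le_one_of_mem_coordDirs hv
  grw [h G (helmholtzList l dirs₁ G) (helmholtzList l dirs₂ (helmholtzList l dirs₁ G)) f g l R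
    hG.continuous hG₁.continuous (contDiff_helmholtzList hG₁ l dirs₂).continuous
    ((subset_tsupport _).trans hGR) ((subset_tsupport _).trans (hts₁.trans hGR))
    ((subset_tsupport _).trans (hts₂.trans hGR)) (fun η z ↦ ?_) (fun ξ z ↦ ?_) hf hg, hbound]
  · exact le_of_eq (by ring)
  · simpa using ft_helmholtzList_comp_affine hG hc (A := .inl ℝ (En n) (En n))
      LinearMap.inl_injective (0, η) l z
  · simpa using ft_helmholtzList_comp_affine hG₁ (hc.of_isClosed_subset (isClosed_tsupport _) hts₁)
      (A := .inr ℝ (En n) (En n)) LinearMap.inr_injective (ξ, 0) l z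

end Helmholtz

section DyadicDecomposition

variable {E F : Type*} [NormedAddCommGroup E] [NormedSpace ℝ E]
  [NormedAddCommGroup F] [NormedSpace ℝ F]

lemma jetNorm_mono {l l' : ℝ} (hl : 0 ≤ l) (hll' : l ≤ l') (N : ℕ) (G : E → F) (x : E) :
    jetNorm l N G x ≤ jetNorm l' N G x := by
  unfold jetNorm
  gcongr

lemma jetNorm_sub_le {G H : E → F} (hG : ContDiff ℝ (⊤ : ℕ∞) G) (hH : ContDiff ℝ (⊤ : ℕ∞) H)
    {l : ℝ} (hl : 0 ≤ l) (N : ℕ) (x : E) :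
    jetNorm l N (fun y ↦ G y - H y) x ≤ jetNorm l N G x + jetNorm l N H x := by
  simp only [jetNorm, ← Finset.sum_add_distrib, ← mul_add]
  gcongr with j _
  have hj : (j : WithTop ℕ∞) ≤ (⊤ : ℕ∞) := by exact_mod_cast le_top
  rw [fun_iteratedFDeriv_sub_apply (hG.of_le hj).contDiffAt (hH.of_le hj).contDiffAt]
  exact norm_sub_le _ _

lemma jetNorm_comp_const_smul {G : E → F} (hG : ContDiff ℝ (⊤ : ℕ∞) G) {c : ℝ} (hc : 0 ≤ c)
    (l : ℝ) (N : ℕ) (x : E) :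
    jetNorm l N (fun y ↦ G (c • y)) x = jetNorm (l * c) N G (c • x) := by
  refine Finset.sum_congr rfl fun j _ ↦ ?_
  rw [congrFun (iteratedFDeriv_comp_const_smul c (hG.of_le (by exact_mod_cast le_top))) x,
    norm_smul, Real.norm_of_nonneg (pow_nonneg hc j)]
  ring

lemma exists_jetNorm_le_of_hasCompactSupport {G : E → F} (hG : ContDiff ℝ (⊤ : ℕ∞) G)
    (hc : HasCompactSupport G) {l : ℝ} (hl : 0 ≤ l) (N : ℕ) : ∃ B, ∀ x, jetNorm l N G x ≤ B := by
  choose B hB using fun j : ℕ ↦ (hc.iteratedFDeriv (𝕜 := ℝ) j).exists_bound_of_continuous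
    (hG.continuous_iteratedFDeriv (by exact_mod_cast le_top))
  exact ⟨∑ j ∈ Finset.range (N + 1), l ^ j * B j, fun x ↦
    Finset.sum_le_sum fun j _ ↦ mul_le_mul_of_nonneg_left (hB j x) (by positivity)⟩

lemma support_jetNorm_subset (l : ℝ) (N : ℕ) (G : E → F) :
    Function.support (jetNorm l N G) ⊆ tsupport G := by
  intro x hx
  contrapose! hx
  refine Function.notMem_support.2 (Finset.sum_eq_zero fun j _ ↦ ?_)
  rw [Function.notMem_support.1 fun h ↦ hx (support_iteratedFDeriv_subset j h), norm_zero, mul_zero]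

lemma norm_inv_two_pow_smul (k : ℕ) (x : E) : ‖((2 : ℝ) ^ k)⁻¹ • x‖ = ‖x‖ / 2 ^ k := by
  rw [norm_smul, norm_inv, norm_pow, Real.norm_two, inv_mul_eq_div]

section Shell

variable {E : Type*} [NormedAddCommGroup E]

/-- A closed set containing the support of `dyadicPiece k`, on which `1 + ‖x‖` is comparable
to `2 ^ k`. -/
def dyadicShell (E : Type*) [NormedAddCommGroup E] (k : ℕ) : Set E :=
  {x | 2 ^ k ≤ 2 * (1 + ‖x‖) ∧ ‖x‖ ≤ 2 ^ (k + 1)}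

lemma isClosed_dyadicShell (k : ℕ) : IsClosed (dyadicShell E k) := by
  simp only [dyadicShell, Set.ofPred_and]
  exact (isClosed_le (by fun_prop) (by fun_prop)).inter (isClosed_le (by fun_prop) (by fun_prop))

lemma dyadicShell_subset_closedBall (k : ℕ) :
    dyadicShell E k ⊆ Metric.closedBall 0 (2 ^ (k + 1)) :=
  fun _ hx ↦ mem_closedBall_zero_iff.2 hx.2

end Shell

section Cutoff

variable [FiniteDimensional ℝ E]

/-- The smooth cutoff to the ball of radius `2 ^ k`: it is `1` there and vanishes off the ball of
radius `2 ^ (k + 1)`. -/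
def dyadicCutoff (k : ℕ) (x : E) : ℂ :=
  ((⟨1, 2, one_pos, one_lt_two⟩ : ContDiffBump (0 : E)) (((2 : ℝ) ^ k)⁻¹ • x) : ℝ)

/-- The Littlewood–Paley pieces, whose partial sums are the functions `dyadicCutoff`. -/
def dyadicPiece : ℕ → E → ℂ
  | 0, x => dyadicCutoff 0 x
  | k + 1, x => dyadicCutoff (k + 1) x - dyadicCutoff k x

lemma contDiff_dyadicCutoff (k : ℕ) : ContDiff ℝ (⊤ : ℕ∞) (dyadicCutoff (E := E) k) :=
  Complex.ofRealCLM.contDiff.comp ((ContDiffBump.contDiff _).comp (contDiff_const_smul _))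

lemma dyadicCutoff_eq_one {k : ℕ} {x : E} (hx : ‖x‖ ≤ 2 ^ k) : dyadicCutoff k x = 1 := by
  rw [dyadicCutoff, ContDiffBump.one_of_mem_closedBall, Complex.ofReal_one]
  rwa [mem_closedBall_zero_iff, norm_inv_two_pow_smul, div_le_one (by positivity)]

lemma dyadicCutoff_eq_zero {k : ℕ} {x : E} (hx : 2 ^ (k + 1) ≤ ‖x‖) : dyadicCutoff k x = 0 := by
  rw [dyadicCutoff, ContDiffBump.zero_of_le_dist, Complex.ofReal_zero]
  rwa [dist_zero_right, norm_inv_two_pow_smul, le_div_iff₀ (by positivity), ← pow_succ']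

lemma norm_dyadicCutoff_le_one (k : ℕ) (x : E) : ‖dyadicCutoff k x‖ ≤ 1 := by
  rw [dyadicCutoff, Complex.norm_real, Real.norm_of_nonneg (ContDiffBump.nonneg _)]
  exact ContDiffBump.le_one _

lemma contDiff_dyadicPiece : ∀ k : ℕ, ContDiff ℝ (⊤ : ℕ∞) (dyadicPiece (E := E) k)
  | 0 => contDiff_dyadicCutoff 0
  | k + 1 => (contDiff_dyadicCutoff (k + 1)).sub (contDiff_dyadicCutoff k)

lemma norm_dyadicPiece_le_two (k : ℕ) (x : E) : ‖dyadicPiece k x‖ ≤ 2 := by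
  cases k with
  | zero => exact (norm_dyadicCutoff_le_one 0 x).trans one_le_two
  | succ k =>
    exact (norm_sub_le _ _).trans ((add_le_add (norm_dyadicCutoff_le_one _ x)
      (norm_dyadicCutoff_le_one _ x)).trans_eq one_add_one_eq_two)

lemma sum_dyadicPiece (N : ℕ) (x : E) :
    ∑ k ∈ Finset.range (N + 1), dyadicPiece k x = dyadicCutoff N x := by
  rw [Finset.sum_range_succ', add_comm, Finset.eq_sum_range_sub (fun k ↦ dyadicCutoff k x) N]
  rfl

lemma tsupport_dyadicPiece_subset (k : ℕ) :
    tsupport (dyadicPiece (E := E) k) ⊆ dyadicShell E k := by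
  refine closure_minimal (fun x hx ↦ ⟨?_, ?_⟩) (isClosed_dyadicShell k) <;> by_contra! h <;>
    refine hx ?_ <;> cases k with
  | zero => ?_
  | succ k => ?_
  · exact absurd h (by rw [pow_zero]; linarith [norm_nonneg x])
  · have h' : ‖x‖ ≤ 2 ^ k := by rw [pow_succ'] at h; linarith
    simp [dyadicPiece, dyadicCutoff_eq_one h',
      dyadicCutoff_eq_one (h'.trans (pow_le_pow_right₀ one_le_two k.le_succ))]
  · exact dyadicCutoff_eq_zero h.le
  · simp [dyadicPiece, dyadicCutoff_eq_zero h.le,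
      dyadicCutoff_eq_zero ((pow_le_pow_right₀ one_le_two (k + 1).le_succ).trans h.le)]

lemma exists_jetNorm_dyadicPiece_le (E : Type*) [NormedAddCommGroup E] [NormedSpace ℝ E]
    [FiniteDimensional ℝ E] (N : ℕ) :
    ∃ B : ℝ, ∀ (k : ℕ) (l : ℝ) (x : E), 0 ≤ l → l ≤ 2 ^ k →
      jetNorm l N (dyadicPiece (E := E) k) x ≤ B := by
  have hχ := contDiff_dyadicCutoff (E := E) 0
  have hc : HasCompactSupport (dyadicCutoff (E := E) 0) :=
    .of_support_subset_isCompact (isCompact_closedBall 0 2) fun x hx ↦ by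
      by_contra! h
      rw [mem_closedBall_zero_iff, not_le] at h
      exact hx (dyadicCutoff_eq_zero (by simpa using h.le))
  obtain ⟨B, hB⟩ := exists_jetNorm_le_of_hasCompactSupport hχ hc zero_le_two N
  have hcutoff (k : ℕ) (l : ℝ) (x : E) (hl : 0 ≤ l) (hlk : l ≤ 2 * 2 ^ k) :
      jetNorm l N (dyadicCutoff (E := E) k) x ≤ B := by
    have hscale : dyadicCutoff (E := E) k = fun y ↦ dyadicCutoff 0 (((2 : ℝ) ^ k)⁻¹ • y) := by
      ext y
      simp [dyadicCutoff]
    rw [hscale, jetNorm_comp_const_smul hχ (by positivity)]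
    refine (jetNorm_mono (by positivity) ?_ N _ _).trans (hB _)
    rwa [← div_eq_mul_inv, div_le_iff₀ (by positivity)]
  have hB₀ : 0 ≤ B := (jetNorm_nonneg zero_le_two N _ 0).trans (hB 0)
  refine ⟨B + B, fun k l x hl hlk ↦ ?_⟩
  cases k with
  | zero => exact (hcutoff 0 l x hl (by linarith)).trans (by linarith)
  | succ k =>
    exact (jetNorm_sub_le (contDiff_dyadicCutoff _) (contDiff_dyadicCutoff _) hl N x).trans
      (add_le_add (hcutoff _ l x hl (by linarith)) (hcutoff _ l x hl (by rwa [← pow_succ'])))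

theorem enorm_integral_le_tsum_dyadicPiece [MeasurableSpace E] [BorelSpace E] {μ : Measure E}
    (H : E → ℂ) : ‖∫ x, H x ∂μ‖ₑ ≤ ∑' k, ‖∫ x, dyadicPiece k x * H x ∂μ‖ₑ := by
  by_cases hH : Integrable H μ
  swap
  · simp [integral_undef hH]
  have hpiece (k : ℕ) : Integrable (fun x ↦ dyadicPiece k x * H x) μ :=
    hH.bdd_mul (contDiff_dyadicPiece k).continuous.aestronglyMeasurable
      (.of_forall (norm_dyadicPiece_le_two k))
  have hlim : Filter.Tendsto (fun N : ℕ ↦ ∫ x, dyadicCutoff N x * H x ∂μ) .atTop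
      (nhds (∫ x, H x ∂μ)) := by
    refine tendsto_integral_of_dominated_convergence (‖H ·‖) (fun N ↦
      (contDiff_dyadicCutoff N).continuous.aestronglyMeasurable.mul hH.aestronglyMeasurable)
      hH.norm (fun N ↦ .of_forall fun x ↦ ?_) (.of_forall fun x ↦ ?_)
    · grw [norm_mul, norm_dyadicCutoff_le_one, one_mul]
    · obtain ⟨N, hN⟩ := pow_unbounded_of_one_lt ‖x‖ one_lt_two
      refine tendsto_const_nhds.congr' ((Filter.eventually_ge_atTop N).mono fun M hM ↦ ?_)
      simp only [dyadicCutoff_eq_one (hN.le.trans (pow_le_pow_right₀ one_le_two hM)), one_mul]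
  refine le_of_tendsto' hlim.enorm fun N ↦ ?_
  simp_rw [← sum_dyadicPiece, Finset.sum_mul]
  rw [integral_finsetSum _ fun k _ ↦ hpiece k]
  exact (enorm_sum_le _ _).trans (ENNReal.sum_le_tsum _)

end Cutoff

variable {ι : Type*} [Fintype ι]

/-- The analogue of `jetNorm` built from the derivatives along the vectors of a basis, which, unlike
the operator norm of `iteratedFDeriv`, are accessible to estimates on partial derivatives. -/
def coordJetNorm (b : Module.Basis ι ℝ E) (l : ℝ) (N : ℕ) (G : E → F) (x : E) : ℝ :=
  ∑ j ∈ Finset.range (N + 1), ∑ w : Fin j → ι,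
    l ^ j * ‖iterDirDeriv ((List.ofFn w).map b) G x‖

lemma exists_jetNorm_le_coordJetNorm (b : Module.Basis ι ℝ E) (N : ℕ) :
    ∃ C : ℝ, 0 ≤ C ∧ ∀ (G : E → F) (l : ℝ) (x : E), ContDiff ℝ (⊤ : ℕ∞) G → 0 ≤ l →
      jetNorm l N G x ≤ C * coordJetNorm b l N G x := by
  choose C hC hle using exists_norm_iteratedFDeriv_le (F := F) b
  refine ⟨∑ j ∈ Finset.range (N + 1), C j, Finset.sum_nonneg fun j _ ↦ hC j,
    fun G l x hG hl ↦ ?_⟩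
  rw [jetNorm, coordJetNorm, Finset.mul_sum]
  refine Finset.sum_le_sum fun j hj ↦ ?_
  grw [hle j G x hG, ← Finset.single_le_sum (fun i _ ↦ hC i) hj, ← Finset.mul_sum]
  exact le_of_eq (by ring)

theorem exists_eLpNorm_jetNorm_dyadicPiece_mul_le [FiniteDimensional ℝ E]
    [MeasurableSpace E] (b : Module.Basis ι ℝ E) (N : ℕ) : ∃ C : ℝ≥0∞, C ≠ ∞ ∧
      ∀ (μ : Measure E) (t : ℝ≥0∞) (G : E → ℂ) (k : ℕ) (l : ℝ), ContDiff ℝ (⊤ : ℕ∞) G → 0 ≤ l →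
        l ≤ 2 ^ k → eLpNorm (jetNorm l N fun x ↦ dyadicPiece k x * G x) t μ ≤
          C * eLpNorm (coordJetNorm b l N G) t (μ.restrict (dyadicShell E k)) := by
  obtain ⟨B, hB⟩ := exists_jetNorm_dyadicPiece_le E N
  obtain ⟨C, hC, hcoord⟩ := exists_jetNorm_le_coordJetNorm (F := ℂ) b N
  refine ⟨ENNReal.ofReal (2 ^ N * (B * C)), ENNReal.ofReal_ne_top, fun μ t G k l hG hl hlk ↦ ?_⟩
  have hsupp : Function.support (jetNorm l N fun x ↦ dyadicPiece k x * G x) ⊆ dyadicShell E k :=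
    (support_jetNorm_subset l N _).trans
      ((tsupport_mul_subset_left).trans (tsupport_dyadicPiece_subset k))
  rw [← eLpNorm_restrict_eq_of_support_subset hsupp]
  refine eLpNorm_le_mul_eLpNorm_of_ae_le_mul (.of_forall fun x ↦ ?_) t
  have hB₀ : 0 ≤ B := (jetNorm_nonneg hl N _ x).trans (hB k l x hl hlk)
  rw [Real.norm_of_nonneg (jetNorm_nonneg hl N _ x)]
  grw [jetNorm_mul_le (contDiff_dyadicPiece k) hG hl, hB k l x hl hlk, hcoord G l x hG hl,
    ← Real.le_norm_self (coordJetNorm b l N G x)]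
  · exact le_of_eq (by ring)
  · exact jetNorm_nonneg hl N G x

end DyadicDecomposition

section Amplitude

lemma rpow_one_add_norm_le_of_mem_dyadicShell {E F : Type*} [NormedAddCommGroup E]
    [NormedAddCommGroup F] {k : ℕ} {w : E × F} (hw : w ∈ dyadicShell (E × F) k) (e : ℝ) :
    (1 + ‖w.1‖ + ‖w.2‖) ^ e ≤ 8 ^ |e| * 2 ^ (e * k) := by
  obtain ⟨hlow, hup⟩ := hw
  have hk : (1 : ℝ) ≤ 2 ^ k := one_le_pow₀ one_le_two
  have hfst := norm_fst_le w
  have hsnd := norm_snd_le w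
  have hle : ‖w‖ ≤ ‖w.1‖ + ‖w.2‖ :=
    max_le (le_add_of_nonneg_right (norm_nonneg _)) (le_add_of_nonneg_left (norm_nonneg _))
  have hpos : 0 < 1 + ‖w.1‖ + ‖w.2‖ := by positivity
  rw [pow_succ] at hup
  rw [mul_comm e, Real.rpow_mul zero_le_two, Real.rpow_natCast]
  rcases le_total 0 e with he | he
  · rw [abs_of_nonneg he, ← Real.mul_rpow (by norm_num) (by positivity)]
    exact Real.rpow_le_rpow hpos.le (by linarith) he
  · rw [abs_of_nonpos he, Real.rpow_neg (by norm_num), ← Real.inv_rpow (by norm_num),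
      ← Real.mul_rpow (by norm_num) (by positivity)]
    exact Real.rpow_le_rpow_of_nonpos (by positivity) (by linarith) he

lemma addHaar_closedBall_two_pow {E : Type*} [NormedAddCommGroup E] [NormedSpace ℝ E]
    [FiniteDimensional ℝ E] [MeasurableSpace E] [BorelSpace E] (μ : Measure E)
    [μ.IsAddHaarMeasure] (k : ℕ) :
    μ (Metric.closedBall 0 (2 ^ (k + 1))) =
      μ (Metric.closedBall 0 2) * ENNReal.ofReal (2 ^ (Module.finrank ℝ E * k : ℝ)) := by
  rw [pow_succ, Measure.addHaar_closedBall_mul _ _ (by positivity) zero_le_two, mul_comm,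
    mul_comm (Module.finrank ℝ E : ℝ), Real.rpow_mul zero_le_two, Real.rpow_natCast,
    Real.rpow_natCast]

variable {n : ℕ} {p : ℝ≥0∞} {m ρ : ℝ} {a : En n → En n → En n → ℂ}

lemma aestronglyMeasurable_iterDirDeriv_of_lpSm2 (ha : LpSm2 p m ρ a)
    (L : List (Fin n ⊕ Fin n)) (w : En n × En n) :
    AEStronglyMeasurable (fun x ↦ iterDirDeriv (L.map (freqBasis n)) (fun q ↦ a x q.1 q.2) w)
      volume := by
  simpa only [iterDirDeriv_freqBasis_eq_d2 (ha.1 _)] using ha.2.1 _ _ w.1 w.2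

lemma exists_eLpNorm_iterDirDeriv_le_of_lpSm2 (ha : LpSm2 p m ρ a) (L : List (Fin n ⊕ Fin n)) :
    ∃ C : ℝ≥0∞, C ≠ ∞ ∧ ∀ (k : ℕ), ∀ w ∈ dyadicShell (En n × En n) k,
      eLpNorm (fun x ↦ iterDirDeriv (L.map (freqBasis n)) (fun q ↦ a x q.1 q.2) w) p volume ≤
        C * ENNReal.ofReal (2 ^ ((m - ρ * L.length) * k)) := by
  obtain ⟨c, hc⟩ := ha.2.2 (fun i ↦ L.count (.inl i)) (fun i ↦ L.count (.inr i))
  refine ⟨ENNReal.ofReal (|c| * 8 ^ |m - ρ * L.length|), ENNReal.ofReal_ne_top, fun k w hw ↦ ?_⟩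
  have hdeg : (mdeg (fun i ↦ L.count (.inl i)) : ℝ) + mdeg (fun i ↦ L.count (.inr i)) =
      L.length := by
    exact_mod_cast mdeg_count_add_mdeg_count L
  simp only [iterDirDeriv_freqBasis_eq_d2 (ha.1 _)]
  grw [hc w.1 w.2, hdeg, ← ENNReal.ofReal_mul (by positivity), le_abs_self c,
    rpow_one_add_norm_le_of_mem_dyadicShell hw, mul_assoc]

lemma eLpNorm_sum_const_mul_norm_le {X ι E : Type*} [MeasurableSpace X] {μ : Measure X}
    [NormedAddCommGroup E] {q : ℝ≥0∞} (hq : 1 ≤ q) (s : Finset ι) {f : ι → X → E}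
    (hf : ∀ i ∈ s, AEStronglyMeasurable (f i) μ) {c : ι → ℝ} (hc : ∀ i ∈ s, 0 ≤ c i) :
    eLpNorm (fun x ↦ ∑ i ∈ s, c i * ‖f i x‖) q μ ≤
      ∑ i ∈ s, ENNReal.ofReal (c i) * eLpNorm (f i) q μ := by
  have hsum : (fun x ↦ ∑ i ∈ s, c i * ‖f i x‖) = ∑ i ∈ s, c i • fun x ↦ ‖f i x‖ := by
    ext x
    simp
  rw [hsum]
  refine (eLpNorm_sum_le (fun i hi ↦ (hf i hi).norm.const_smul _) hq).trans
    (Finset.sum_le_sum fun i hi ↦ ?_)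
  rw [eLpNorm_const_smul, eLpNorm_norm, Real.enorm_of_nonneg (hc i hi)]

lemma exists_eLpNorm_coordJetNorm_le (hp : 1 ≤ p) (ha : LpSm2 p m ρ a) (N : ℕ) :
    ∃ C : ℝ≥0∞, C ≠ ∞ ∧ ∀ (k : ℕ), ∀ w ∈ dyadicShell (En n × En n) k,
      eLpNorm (fun x ↦ coordJetNorm (freqBasis n) (2 ^ (ρ * k)) N (fun q ↦ a x q.1 q.2) w) p
        volume ≤ C * ENNReal.ofReal (2 ^ (m * k)) := by
  choose C hC hle using fun L : List (Fin n ⊕ Fin n) ↦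
    exists_eLpNorm_iterDirDeriv_le_of_lpSm2 ha L
  refine ⟨∑ j ∈ Finset.range (N + 1), ∑ v : Fin j → Fin n ⊕ Fin n, C (List.ofFn v),
    ENNReal.sum_ne_top.2 fun j _ ↦ ENNReal.sum_ne_top.2 fun v _ ↦ hC _, fun k w hw ↦ ?_⟩
  simp only [coordJetNorm, Finset.sum_sigma', Finset.sum_mul]
  refine (eLpNorm_sum_const_mul_norm_le hp _ (fun v _ ↦
    aestronglyMeasurable_iterDirDeriv_of_lpSm2 ha _ w) fun v _ ↦ by positivity).trans
    (Finset.sum_le_sum fun v _ ↦ ?_)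
  grw [hle _ k w hw, mul_left_comm, ← Real.rpow_mul_natCast zero_le_two, ← ofReal_two_rpow_add,
    List.length_ofFn]
  exact le_of_eq (by ring_nf)

lemma aestronglyMeasurable_uncurry_coordJetNorm (ha : LpSm2 p m ρ a) (l : ℝ) (N : ℕ)
    (ν : Measure (En n × En n)) :
    AEStronglyMeasurable (Function.uncurry fun x w ↦
      coordJetNorm (freqBasis n) l N (fun q ↦ a x q.1 q.2) w) (volume.prod ν) := by
  refine aestronglyMeasurable_uncurry_of_continuous (fun x ↦ ?_) fun w ↦ ?_
  · exact continuous_finsetSum _ fun j _ ↦ continuous_finsetSum _ fun v _ ↦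
      continuous_const.mul (contDiff_iterDirDeriv (ha.1 x) _).continuous.norm
  · exact Finset.aestronglyMeasurable_fun_sum _ fun j _ ↦
      Finset.aestronglyMeasurable_fun_sum _ fun v _ ↦
        (aestronglyMeasurable_iterDirDeriv_of_lpSm2 ha _ w).norm.const_mul _

theorem exists_eLpNorm_eLpNorm_coordJetNorm_le {t : ℝ≥0∞} (ht : t ≠ 0) (htp : t ≤ p)
    (hp : 1 ≤ p) (ha : LpSm2 p m ρ a) (N : ℕ) : ∃ C : ℝ≥0∞, C ≠ ∞ ∧ ∀ k : ℕ,
      eLpNorm (fun x ↦ eLpNorm (coordJetNorm (freqBasis n) (2 ^ (ρ * k)) N fun q ↦ a x q.1 q.2) t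
        (volume.restrict (dyadicShell (En n × En n) k))) p volume ≤
        C * ENNReal.ofReal (2 ^ ((m + 2 * n / t.toReal) * k)) := by
  have hHaar : (volume : Measure (En n × En n)).IsAddHaarMeasure := by
    rw [Measure.volume_eq_prod]
    infer_instance
  obtain ⟨C, hC, hle⟩ := exists_eLpNorm_coordJetNorm_le hp ha N
  have hexp : 0 ≤ 1 / t.toReal := by positivity
  refine ⟨C * volume (Metric.closedBall (0 : En n × En n) 2) ^ (1 / t.toReal),
    ENNReal.mul_ne_top hC (ENNReal.rpow_ne_top_of_nonneg hexp measure_closedBall_lt_top.ne),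
    fun k ↦ ?_⟩
  have hvol : volume (dyadicShell (En n × En n) k) ≤ _ :=
    measure_mono (dyadicShell_subset_closedBall k)
  have : IsFiniteMeasure (volume.restrict (dyadicShell (En n × En n) k)) :=
    isFiniteMeasure_restrict.2 (hvol.trans_lt measure_closedBall_lt_top).ne
  have hmeas := isClosed_dyadicShell (E := En n × En n) k |>.measurableSet
  grw [eLpNorm_eLpNorm_le ht htp (aestronglyMeasurable_uncurry_coordJetNorm ha _ N _)
    (ae_restrict_of_forall_mem hmeas (hle k)), Measure.restrict_apply_univ, hvol,
    addHaar_closedBall_two_pow, ENNReal.mul_rpow_of_nonneg _ _ hexp, ofReal_two_rpow_rpow,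
    mul_mul_mul_comm, ← ofReal_two_rpow_add]
  refine le_of_eq ?_
  simp only [Module.finrank_prod, finrank_euclideanSpace_fin, Nat.cast_add]
  ring_nf

end Amplitude

section BilinearOperator

lemma eLpNorm_eLpNorm_comp_add_le {G E : Type*} [AddGroup G] [TopologicalSpace G] [ContinuousAdd G]
    [SecondCountableTopology G] [MeasurableSpace G] [BorelSpace G] [NormedAddCommGroup E]
    {μ ν : Measure G} [SFinite μ] [μ.IsAddRightInvariant] [IsFiniteMeasure ν] {f : G → E}
    (hf : Continuous f) (hf' : AEStronglyMeasurable f μ) {s q : ℝ≥0∞} (hs : s ≠ 0) (hsq : s ≤ q) :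
    eLpNorm (fun x ↦ eLpNorm (fun z ↦ f (x + z)) s ν) q μ ≤
      eLpNorm f q μ * ν Set.univ ^ (1 / s.toReal) := by
  refine eLpNorm_eLpNorm_le hs hsq (B := fun x z ↦ f (x + z))
    (hf.comp continuous_add).aestronglyMeasurable (.of_forall fun z ↦ le_of_eq ?_)
  exact eLpNorm_comp_measurePreserving hf' (measurePreserving_add_right μ z)

variable {n : ℕ}

lemma bfio_inner_eq_integral_ft_comp_add (a : En n → En n → En n → ℂ) (f g : En n → ℂ) (x : En n) :
    bfio a (fun x ξ ↦ ⟪x, ξ⟫) (fun x η ↦ ⟪x, η⟫) f g x =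
      ∫ w : En n × En n,
        a x w.1 w.2 * (ft (fun z ↦ f (x + z)) w.1 * ft (fun z ↦ g (x + z)) w.2) := by
  simp only [bfio, ft_comp_add_left, Complex.ofReal_add, mul_add, Complex.exp_add]
  congr with w
  ring

lemma eLpNorm_eLpNorm_comp_add_dualMeasure_le {f : En n → ℂ} (hf : Continuous f) {s q : ℝ≥0∞}
    (hs : s ≠ 0) (hsq : s ≤ q) (ρ : ℝ) (k : ℕ) :
    eLpNorm (fun x ↦ eLpNorm (fun z ↦ f (x + z)) s (dualMeasure n (2 ^ (ρ * k)))) q volume ≤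
      ENNReal.ofReal (π ^ n) ^ (1 / s.toReal) * eLpNorm f q volume *
        ENNReal.ofReal (2 ^ (-(n * ρ / s.toReal) * k)) := by
  have hl : (0 : ℝ) < 2 ^ (ρ * k) := by positivity
  have : IsFiniteMeasure (dualMeasure n (2 ^ (ρ * k))) := ⟨by simp [dualMeasure_univ n hl]⟩
  have hmass : ENNReal.ofReal ((π / 2 ^ (ρ * k)) ^ n) =
      ENNReal.ofReal (π ^ n) * ENNReal.ofReal (2 ^ (-(n * ρ) * k : ℝ)) := by
    rw [← ENNReal.ofReal_mul (by positivity), div_pow, div_eq_mul_inv,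
      ← Real.rpow_mul_natCast zero_le_two, ← Real.rpow_neg zero_le_two]
    ring_nf
  grw [eLpNorm_eLpNorm_comp_add_le hf hf.aestronglyMeasurable hs hsq, dualMeasure_univ n hl, hmass,
    ENNReal.mul_rpow_of_nonneg _ _ (by positivity), ofReal_two_rpow_rpow]
  exact le_of_eq (by ring_nf)

lemma aemeasurable_eLpNorm_comp_add_dualMeasure {f : En n → ℂ} (hf : Continuous f) {s : ℝ≥0∞}
    (hs : s ≠ ∞) {l : ℝ} (hl : 0 < l) :
    AEMeasurable (fun x ↦ eLpNorm (fun z ↦ f (x + z)) s (dualMeasure n l)) := by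
  have : IsFiniteMeasure (dualMeasure n l) := ⟨by simp [dualMeasure_univ n hl]⟩
  exact aemeasurable_eLpNorm_section (B := fun x z ↦ f (x + z)) hs
    (hf.comp continuous_add).aestronglyMeasurable

theorem exists_enorm_bfio_le {s₁ s₂ t : ℝ≥0∞} (hs₁ : 1 ≤ s₁) (hs₁' : s₁ ≤ 2) (hs₁t : s₁ ≤ t)
    (hs₂ : 1 ≤ s₂) (hs₂' : s₂ ≤ 2) (hs₂t : s₂ ≤ t) (ht : t ≠ ∞) {ρ : ℝ} (hρ : ρ ≤ 1) :
    ∃ C : ℝ≥0∞, C ≠ ∞ ∧ ∀ (a : En n → En n → En n → ℂ) (f g : En n → ℂ) (x : En n),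
      ContDiff ℝ (⊤ : ℕ∞) (fun q : En n × En n ↦ a x q.1 q.2) → Integrable f → Integrable g →
      ‖bfio a (fun x ξ ↦ ⟪x, ξ⟫) (fun x η ↦ ⟪x, η⟫) f g x‖ₑ ≤
        ∑' k : ℕ, C * ENNReal.ofReal
            (2 ^ (n * (1 / s₁.toReal + 1 / s₂.toReal - 2 / t.toReal) * k)) *
          eLpNorm (coordJetNorm (freqBasis n) (2 ^ (ρ * k)) (4 * n) fun q ↦ a x q.1 q.2) t
            (volume.restrict (dyadicShell (En n × En n) k)) *
          (eLpNorm (fun z ↦ f (x + z)) s₁ (dualMeasure n (2 ^ (ρ * k))) *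
            eLpNorm (fun z ↦ g (x + z)) s₂ (dualMeasure n (2 ^ (ρ * k)))) := by
  obtain ⟨C₁, hC₁, hint⟩ := exists_enorm_integral_mul_ft_mul_ft_le_jetNorm (n := n)
    hs₁ hs₁' hs₁t hs₂ hs₂' hs₂t ht
  obtain ⟨C₂, hC₂, hjet⟩ := exists_eLpNorm_jetNorm_dyadicPiece_mul_le (freqBasis n) (4 * n)
  have hexp {s : ℝ≥0∞} (hs : 1 ≤ s) (hst : s ≤ t) : 0 ≤ 1 / s.toReal - 1 / t.toReal :=
    one_div_toReal_sub_one_div_toReal_nonneg (zero_lt_one.trans_le hs).ne' hst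
  set V := volume (Metric.closedBall (0 : En n) 2)
  have hV : V ≠ ∞ := measure_closedBall_lt_top.ne
  refine ⟨C₁ * C₂ * (V ^ (1 / s₁.toReal - 1 / t.toReal) * V ^ (1 / s₂.toReal - 1 / t.toReal)),
    ENNReal.mul_ne_top (ENNReal.mul_ne_top hC₁ hC₂) (ENNReal.mul_ne_top
      (ENNReal.rpow_ne_top_of_nonneg (hexp hs₁ hs₁t) hV)
      (ENNReal.rpow_ne_top_of_nonneg (hexp hs₂ hs₂t) hV)), fun a f g x ha hf hg ↦ ?_⟩
  rw [bfio_inner_eq_integral_ft_comp_add]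
  refine (enorm_integral_le_tsum_dyadicPiece _).trans (ENNReal.tsum_le_tsum fun k ↦ ?_)
  have hl : (0 : ℝ) ≤ 2 ^ (ρ * k) := by positivity
  have hlk : (2 : ℝ) ^ (ρ * k) ≤ 2 ^ k := by
    rw [← Real.rpow_natCast]
    exact Real.rpow_le_rpow_of_exponent_le one_le_two (mul_le_of_le_one_left k.cast_nonneg hρ)
  have hsupp : tsupport (fun w : En n × En n ↦ dyadicPiece k w * a x w.1 w.2) ⊆
      Metric.closedBall 0 (2 ^ (k + 1)) :=
    tsupport_mul_subset_left.trans
      ((tsupport_dyadicPiece_subset k).trans (dyadicShell_subset_closedBall k))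
  have hpow {s : ℝ≥0∞} (hs : 1 ≤ s) (hst : s ≤ t) :
      volume (Metric.closedBall (0 : En n) (2 ^ (k + 1))) ^ (1 / s.toReal - 1 / t.toReal) =
        V ^ (1 / s.toReal - 1 / t.toReal) *
          ENNReal.ofReal (2 ^ (n * k * (1 / s.toReal - 1 / t.toReal))) := by
    rw [addHaar_closedBall_two_pow, ENNReal.mul_rpow_of_nonneg _ _ (hexp hs hst),
      ofReal_two_rpow_rpow, finrank_euclideanSpace_fin]
  simp only [← mul_assoc (dyadicPiece k _)]
  grw [hint _ _ _ _ _ ((contDiff_dyadicPiece k).mul ha) hsupp hl (hf.comp_add_left x)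
    (hg.comp_add_left x), hjet volume t _ k _ ha hl hlk, hpow hs₁ hs₁t, hpow hs₂ hs₂t,
    mul_mul_mul_comm (V ^ _), ← ofReal_two_rpow_add]
  refine le_of_eq ?_
  ring_nf

end BilinearOperator

section Boundedness

variable {n : ℕ} {r p q₁ q₂ : ℝ≥0∞} {m ρ : ℝ} {a : En n → En n → En n → ℂ}

theorem exists_eLpNorm_bfio_le {s₁ s₂ t : ℝ≥0∞} (hs₁ : 1 ≤ s₁) (hs₁' : s₁ ≤ 2) (hs₁t : s₁ ≤ t)
    (hs₁q : s₁ ≤ q₁) (hs₂ : 1 ≤ s₂) (hs₂' : s₂ ≤ 2) (hs₂t : s₂ ≤ t) (hs₂q : s₂ ≤ q₂)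
    (ht : t ≠ ∞) (htp : t ≤ p) (hr : r⁻¹ = p⁻¹ + q₁⁻¹ + q₂⁻¹) (hρ : ρ ≤ 1)
    (hm : m < n * (ρ - 1) * (1 / s₁.toReal + 1 / s₂.toReal)) (ha : LpSm2 p m ρ a) :
    ∃ C : ℝ≥0∞, C ≠ ∞ ∧ ∀ f g : 𝓢(En n, ℂ),
      eLpNorm (bfio a (fun x ξ ↦ ⟪x, ξ⟫) (fun x η ↦ ⟪x, η⟫) f g) r volume ≤
        C * eLpNorm f q₁ volume * eLpNorm g q₂ volume := by
  have hp : 1 ≤ p := hs₁.trans (hs₁t.trans htp)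
  have hs₁₀ : s₁ ≠ 0 := (zero_lt_one.trans_le hs₁).ne'
  have hs₂₀ : s₂ ≠ 0 := (zero_lt_one.trans_le hs₂).ne'
  have ht₀ : t ≠ 0 := (zero_lt_one.trans_le (hs₁.trans hs₁t)).ne'
  obtain ⟨C₁, hC₁, hbfio⟩ :=
    exists_enorm_bfio_le (n := n) hs₁ hs₁' hs₁t hs₂ hs₂' hs₂t ht hρ
  obtain ⟨C₂, hC₂, hcoord⟩ := exists_eLpNorm_eLpNorm_coordJetNorm_le ht₀ htp hp ha (4 * n)
  set σ := 1 / s₁.toReal + 1 / s₂.toReal with hσ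
  set δ := (m + n * (1 - ρ) * σ) / 3 with hδ
  have hδ_neg : δ < 0 := by linarith
  set K : ℝ≥0∞ := ENNReal.ofReal (π ^ n)
  refine ⟨(∑' k : ℕ, ENNReal.ofReal (2 ^ (δ * k))) ^ 3 *
    (C₁ * C₂ * K ^ (1 / s₁.toReal) * K ^ (1 / s₂.toReal)), ?_, fun f g ↦ ?_⟩
  · have hK (s : ℝ≥0∞) : K ^ (1 / s.toReal) ≠ ∞ :=
      ENNReal.rpow_ne_top_of_nonneg (by positivity) ENNReal.ofReal_ne_top
    finiteness [(tsum_ofReal_two_rpow_mul_lt_top hδ_neg).ne, hK s₁, hK s₂]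
  have hcoord' (k : ℕ) : eLpNorm (fun x ↦ C₁ * ENNReal.ofReal (2 ^ (n * (σ - 2 / t.toReal) * k)) *
      eLpNorm (coordJetNorm (freqBasis n) (2 ^ (ρ * k)) (4 * n) fun q ↦ a x q.1 q.2) t
        (volume.restrict (dyadicShell (En n × En n) k))) p volume ≤
      C₁ * C₂ * ENNReal.ofReal (2 ^ ((m + n * σ) * k)) := by
    grw [eLpNorm_const_mul_le (by finiteness), hcoord k, mul_mul_mul_comm, ← ofReal_two_rpow_add]
    exact le_of_eq (by ring_nf)
  calc
    _ ≤ _ := eLpNorm_mono_enorm fun x ↦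
      (hbfio a f g x (ha.1 x) f.integrable g.integrable).trans_eq (enorm_eq_self _).symm
    _ ≤ _ := eLpNorm_tsum_mul_mul_le_of_dyadic (δ := δ) hp (hs₁.trans hs₁q)
      (hs₂.trans hs₂q) hr (by rw [hδ, hσ]; ring)
      (fun k ↦ (aemeasurable_eLpNorm_section ht
        (aestronglyMeasurable_uncurry_coordJetNorm ha _ _ _)).const_mul _)
      (fun k ↦ aemeasurable_eLpNorm_comp_add_dualMeasure f.continuous
        (hs₁t.trans_lt ht.lt_top).ne (by positivity))
      (fun k ↦ aemeasurable_eLpNorm_comp_add_dualMeasure g.continuous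
        (hs₂t.trans_lt ht.lt_top).ne (by positivity)) hcoord'
      (eLpNorm_eLpNorm_comp_add_dualMeasure_le f.continuous hs₁₀ hs₁q ρ)
      (eLpNorm_eLpNorm_comp_add_dualMeasure_le g.continuous hs₂₀ hs₂q ρ)
    _ = _ := by ring

lemma inv_min_toReal_add_inv_min_toReal_le (hp : p ≠ 0) (hq₁ : q₁ ≠ 0) (hq₂ : q₂ ≠ 0) :
    (min 2 (min q₁ p))⁻¹.toReal + (min 2 (min q₂ p))⁻¹.toReal ≤
      (min 2 (min (max q₁ q₂) p))⁻¹.toReal +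
        (min 2 (min (min q₁ q₂) (p⁻¹ + (max q₁ q₂)⁻¹)⁻¹))⁻¹.toReal := by
  wlog h : q₂ ≤ q₁ generalizing q₁ q₂
  · rw [add_comm, max_comm, min_comm q₁ q₂]
    exact this hq₂ hq₁ (le_of_not_ge h)
  rw [max_eq_left h, min_eq_right h]
  have hmin : min 2 (min q₂ (p⁻¹ + q₁⁻¹)⁻¹) ≠ 0 := by simp [hp, hq₁, hq₂]
  exact add_le_add_right (ENNReal.toReal_mono (ENNReal.inv_ne_top.2 hmin) (ENNReal.inv_le_inv.2
    (min_le_min_left _ (min_le_min_left _ (ENNReal.inv_le_iff_inv_le.2 le_self_add))))) _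

end Boundedness

theorem statement17_general {n : ℕ} (r p q₁ q₂ : ℝ≥0∞) (hp : 1 ≤ p) (hq₁ : 1 ≤ q₁) (hq₂ : 1 ≤ q₂)
    (hrel : r⁻¹ = p⁻¹ + q₁⁻¹ + q₂⁻¹) (m ρ : ℝ) (hρ1 : ρ ≤ 1)
    (hm : m < (n : ℝ) * (ρ - 1) *
      ((min 2 (min q₁ p))⁻¹.toReal + (min 2 (min q₂ p))⁻¹.toReal))
    (a : En n → En n → En n → ℂ) (ha : LpSm2 p m ρ a) :
    ∃ C : ℝ, 0 < C ∧ ∀ f g : 𝓢(En n, ℂ),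
      eLpNorm (bfio a (fun x ξ => ⟪x, ξ⟫) (fun x η => ⟪x, η⟫) (⇑f) (⇑g)) r volume ≤
        ENNReal.ofReal C * eLpNorm (⇑f) q₁ volume * eLpNorm (⇑g) q₂ volume := by
  have hone {q : ℝ≥0∞} (hq : 1 ≤ q) : 1 ≤ min 2 (min q p) :=
    le_min one_le_two (le_min hq hp)
  have hmin_le (q : ℝ≥0∞) : min 2 (min q p) ≤ min 2 p := min_le_min_left _ (min_le_right _ _)
  obtain ⟨C, hC, hle⟩ := exists_eLpNorm_bfio_le (hone hq₁) (min_le_left _ _) (hmin_le q₁)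
    ((min_le_right _ _).trans (min_le_left _ _)) (hone hq₂) (min_le_left _ _) (hmin_le q₂)
    ((min_le_right _ _).trans (min_le_left _ _))
    (ne_top_of_le_ne_top ENNReal.ofNat_ne_top (min_le_left _ _)) (min_le_right _ _) hrel hρ1
    (by simpa only [one_div, ← ENNReal.toReal_inv] using hm) ha
  refine ⟨C.toReal + 1, by positivity, fun f g ↦ (hle f g).trans ?_⟩
  gcongr
  exact ENNReal.le_ofReal_iff_toReal_le hC (by positivity) |>.2 (by linarith)

/-- Theorem 5.18: boundedness of rough bilinear pseudodifferential
operators. -/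
theorem statement17 {n : ℕ} (r p q₁ q₂ : ℝ≥0∞) (hp : 1 ≤ p)
    (hq₁ : 1 ≤ q₁) (hq₂ : 1 ≤ q₂) (hrel : r⁻¹ = p⁻¹ + q₁⁻¹ + q₂⁻¹)
    (hmaxp : pconj p ≤ max q₁ q₂)
    (m ρ : ℝ) (hρ0 : 0 ≤ ρ) (hρ1 : ρ ≤ 1)
    (hm : m < (n : ℝ) * (ρ - 1) *
      ((min 2 (min (max q₁ q₂) p))⁻¹.toReal +
        (min 2 (min (min q₁ q₂) (p⁻¹ + (max q₁ q₂)⁻¹)⁻¹))⁻¹.toReal))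
    (a : En n → En n → En n → ℂ) (ha : LpSm2 p m ρ a) :
    ∃ C : ℝ, 0 < C ∧ ∀ f g : 𝓢(En n, ℂ),
      eLpNorm (bfio a (fun x ξ => ⟪x, ξ⟫) (fun x η => ⟪x, η⟫) (⇑f) (⇑g)) r volume ≤
        ENNReal.ofReal C * eLpNorm (⇑f) q₁ volume * eLpNorm (⇑g) q₂ volume :=
  statement17_general r p q₁ q₂ hp hq₁ hq₂ hrel m ρ hρ1 (hm.trans_le
    (mul_le_mul_of_nonpos_left (inv_min_toReal_add_inv_min_toReal_le (zero_lt_one.trans_le hp).ne'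
      (zero_lt_one.trans_le hq₁).ne' (zero_lt_one.trans_le hq₂).ne')
      (mul_nonpos_of_nonneg_of_nonpos n.cast_nonneg (sub_nonpos.2 hρ1)))) a ha
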